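/- For every odd integer k ≥ 5, the limit as n → ∞ of S_k(n)^{1/π(n)} exists and equals β_k; moreover β ≥ β₅ ≥ β₇ ≥ ⋯ is non-increasing and β_k ≥ β⁻ for every odd k ≥ 5. -/

import Mathlib

open scoped Classical

/-- A finite set of naturals is multiplicative `k`-Sidon if it contains no `2k`
distinct elements `a₁, …, aₖ, b₁, …, bₖ` with `a₁⋯aₖ = b₁⋯bₖ`. -/
def MulKSidon (k : ℕ) (A : Finset ℕ) : Prop :=
  ¬ ∃ a b : Fin k → ℕ, (∀ i, a i ∈ A) ∧ (∀ i, b i ∈ A) ∧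
    Function.Injective (Sum.elim a b) ∧ (∏ i, a i) = (∏ i, b i)

/-- `Sk k n`: the number of multiplicative `k`-Sidon subsets of `{1, …, n}`. -/
noncomputable def Sk (k n : ℕ) : ℕ :=
  ((Finset.Icc 1 n).powerset.filter (fun A => MulKSidon k A)).card

/-- `R(G) = {a/b : ab ∈ E(G)} ⊆ ℚ`, the set of ratios of edges of `G`. -/
def ratioSet (G : SimpleGraph ℕ) : Set ℚ :=
  {r : ℚ | ∃ a b : ℕ, G.Adj a b ∧ r = (a : ℚ) / b}

/-- A graph on the positive integers is `k`-product-free if there is no solution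
to `x₁x₂⋯x_{k−1} = x_k` with all `xᵢ ∈ R(G)` (not necessarily distinct). -/
def KProductFree (k : ℕ) (G : SimpleGraph ℕ) : Prop :=
  (∀ a b : ℕ, G.Adj a b → 0 < a) ∧
  ¬ ∃ (x : Fin (k - 1) → ℚ) (y : ℚ), (∀ i, x i ∈ ratioSet G) ∧
      y ∈ ratioSet G ∧ (∏ i, x i) = y

/-- `eOn G m`: the number of edges of the induced subgraph of `G` on `{1, …, m}`. -/
noncomputable def eOn (G : SimpleGraph ℕ) (m : ℕ) : ℕ :=
  (((Finset.Icc 1 m) ×ˢ (Finset.Icc 1 m)).filter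
    (fun p => p.1 < p.2 ∧ G.Adj p.1 p.2)).card

/-- The value `∏_{m=1}^∞ (e(G_m) + m + 1)^{1/(m²+m)}` associated to a graph `G`. -/
noncomputable def gProd (G : SimpleGraph ℕ) : ℝ :=
  ∏' m : ℕ, ((eOn G (m + 1) : ℝ) + (m + 1) + 1) ^
    ((1 : ℝ) / (((m : ℝ) + 1) ^ 2 + ((m : ℝ) + 1)))

/-- `β_k`: the supremum over all `k`-product-free graphs `G` of
`∏_{m=1}^∞ (e(G_m) + m + 1)^{1/(m²+m)}`; `β = β₃`. -/
noncomputable def betaK (k : ℕ) : ℝ :=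
  sSup {x : ℝ | ∃ G : SimpleGraph ℕ, KProductFree k G ∧ x = gProd G}

/-- `Ω x`: the number of prime divisors of `x` counted with multiplicity. -/
def bigOmega (x : ℕ) : ℕ := (Nat.primeFactorsList x).length

/-- `L k = ∑_{i=1}^k (−1)^{Ω(i)}`, the summatory Liouville function. -/
def L (k : ℕ) : ℤ := ∑ i ∈ Finset.Icc 1 k, (-1 : ℤ) ^ bigOmega i

/-- `β⁻ = ∏_{m=1}^∞ (m²/4 − L(m)²/4 + m + 1)^{1/(m²+m)}`. -/
noncomputable def betaMinus : ℝ :=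
  ∏' m : ℕ, (((m : ℝ) + 1) ^ 2 / 4 - ((L (m + 1) : ℝ)) ^ 2 / 4 + ((m : ℝ) + 1) + 1) ^
    ((1 : ℝ) / (((m : ℝ) + 1) ^ 2 + ((m : ℝ) + 1)))

section Main
open MeasureTheory Filter Topology Set

noncomputable def fejK (v : ℝ) : ℝ := 2 * (1 - Real.cos v) / v ^ 2

lemma fejK_nonneg (v : ℝ) : 0 ≤ fejK v := by
  unfold fejK
  have := Real.cos_le_one v
  apply div_nonneg _ (sq_nonneg v)
  linarith

lemma fejK_le (v : ℝ) : fejK v ≤ 5 * (1 + v ^ 2)⁻¹ := by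
  unfold fejK
  rcases eq_or_ne v 0 with rfl | hv
  · simp
  have h1 := Real.neg_one_le_cos v
  have h2 := Real.one_sub_sq_div_two_le_cos (x := v)
  have h3 : 0 < v ^ 2 := by positivity
  rw [← div_eq_mul_inv, div_le_div_iff₀ h3 (by positivity)]
  nlinarith

lemma fejK_measurable : Measurable fejK := by
  unfold fejK; fun_prop

lemma fejK_integrable : Integrable fejK := by
  refine Integrable.mono' (integrable_inv_one_add_sq.const_mul 5) fejK_measurable.aestronglyMeasurable ?_
  refine Eventually.of_forall fun v => ?_
  rw [Real.norm_of_nonneg (fejK_nonneg v)]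
  exact fejK_le v

lemma fejK_int_pos : 0 < ∫ v, fejK v := by
  rw [integral_pos_iff_support_of_nonneg fejK_nonneg fejK_integrable]
  refine lt_of_lt_of_le ?_ (measure_mono (s := Ioo 0 1) ?_)
  · simp
  · intro v hv
    simp only [Function.mem_support, fejK]
    have h1 : Real.cos v < 1 := by
      rw [← Real.cos_zero]
      exact Real.cos_lt_cos_of_nonneg_of_le_pi le_rfl (by linarith [hv.2, Real.pi_gt_three]) hv.1
    have : 0 < v := hv.1
    have : 0 < 1 - Real.cos v := by linarith
    positivity

open Complex in
lemma fejK_fourier (v : ℝ) (hv : v ≠ 0) :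
    ∫ t in (-1:ℝ)..1, ((1 - |t| : ℝ) : ℂ) * cexp (-(I * t * v)) = (fejK v : ℂ) := by
  have hc : (-(I * v) : ℂ) ≠ 0 := by simp [hv]
  set c : ℂ := -(I * v) with hcdef
  have hc2 : c ^ 2 = -(v:ℂ)^2 := by rw [hcdef, neg_sq, mul_pow, I_sq]; ring
  have hint : ∀ a b : ℝ, IntervalIntegrable
      (fun t : ℝ => ((1 - |t| : ℝ) : ℂ) * cexp (-(I * t * v))) volume a b := by
    intro a b
    apply Continuous.intervalIntegrable
    fun_prop
  rw [← intervalIntegral.integral_add_adjacent_intervals (hint (-1) 0) (hint 0 1)]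
  have e1 : ∫ t in (-1:ℝ)..0, ((1 - |t| : ℝ) : ℂ) * cexp (-(I * t * v))
      = (1 + (0:ℝ)) * cexp (c * (0:ℝ)) / c - cexp (c * (0:ℝ)) / c ^ 2
        - ((1 + (-1:ℝ)) * cexp (c * (-1:ℝ)) / c - cexp (c * (-1:ℝ)) / c ^ 2) := by
    have D : ∀ x ∈ uIcc (-1:ℝ) 0, HasDerivAt
        (fun y : ℝ => (1 + (y:ℂ)) * cexp (c * y) / c - cexp (c * y) / c ^ 2)
        (((1 - |x| : ℝ) : ℂ) * cexp (-(I * x * v))) x := by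
      intro x hx
      rw [uIcc_of_le (by norm_num)] at hx
      have h1 : HasDerivAt (fun y : ℝ => (1 + (y:ℂ))) 1 x := by
        simpa using (Complex.ofRealCLM.hasDerivAt (x := x)).const_add (1:ℂ)
      have h2 : HasDerivAt (fun y : ℝ => cexp (c * y)) (cexp (c * x) * c) x := by
        have := ((Complex.ofRealCLM.hasDerivAt (x := x)).const_mul c).cexp
        simpa using this
      have h3 := ((h1.mul h2).div_const c).sub (h2.div_const (c ^ 2))
      convert! h3 using 1
      rw [abs_of_nonpos hx.2]
      have : -(I * x * v) = c * x := by rw [hcdef]; ring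
      rw [this]
      push_cast
      field_simp
      ring
    exact intervalIntegral.integral_eq_sub_of_hasDerivAt D (hint _ _)
  have e2 : ∫ t in (0:ℝ)..1, ((1 - |t| : ℝ) : ℂ) * cexp (-(I * t * v))
      = (1 - (1:ℝ)) * cexp (c * (1:ℝ)) / c + cexp (c * (1:ℝ)) / c ^ 2
        - ((1 - (0:ℝ)) * cexp (c * (0:ℝ)) / c + cexp (c * (0:ℝ)) / c ^ 2) := by
    have D : ∀ x ∈ uIcc (0:ℝ) 1, HasDerivAt
        (fun y : ℝ => (1 - (y:ℂ)) * cexp (c * y) / c + cexp (c * y) / c ^ 2)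
        (((1 - |x| : ℝ) : ℂ) * cexp (-(I * x * v))) x := by
      intro x hx
      rw [uIcc_of_le (by norm_num)] at hx
      have h1 : HasDerivAt (fun y : ℝ => (1 - (y:ℂ))) (-1) x := by
        simpa using (Complex.ofRealCLM.hasDerivAt (x := x)).const_sub (1:ℂ)
      have h2 : HasDerivAt (fun y : ℝ => cexp (c * y)) (cexp (c * x) * c) x := by
        have := ((Complex.ofRealCLM.hasDerivAt (x := x)).const_mul c).cexp
        simpa using this
      have h3 := ((h1.mul h2).div_const c).add (h2.div_const (c ^ 2))
      convert! h3 using 1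
      rw [abs_of_nonneg hx.1]
      have : -(I * x * v) = c * x := by rw [hcdef]; ring
      rw [this]
      push_cast
      field_simp
      ring
    exact intervalIntegral.integral_eq_sub_of_hasDerivAt D (hint _ _)
  rw [e1, e2]
  have h4 : cexp (c * (1:ℝ)) + cexp (c * (-1:ℝ)) = 2 * Complex.cos v := by
    rw [Complex.two_cos, add_comm]
    congr 1 <;> congr 1 <;> rw [hcdef] <;> push_cast <;> ring
  unfold fejK
  push_cast
  rw [← sub_eq_zero]
  have hv' : (v:ℂ) ≠ 0 := by exact_mod_cast hv
  have h5 : cexp (c * (1:ℝ)) = 2 * Complex.cos v - cexp (c * (-1:ℝ)) := by rw [← h4]; ring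
  push_cast at h5
  rw [h5, hc2]
  simp only [mul_zero, Complex.exp_zero]
  field_simp
  ring

section WI
open Complex

lemma wi_fubini (h : ℝ → ℝ) (hm : Measurable h) (B : ℝ) (hB : ∀ u, |h u| ≤ B) (g : ℂ → ℂ)
    (hlap : ∀ z : ℂ, 0 < z.re → ∫ u in Ioi (0:ℝ), (h u : ℂ) * cexp (-z * u) = g z)
    (T : ℝ) (hT : 0 < T) (σ : ℝ) (hσ : 0 < σ) (y : ℝ) :
    ∫ t in (-1:ℝ)..1, ((1 - |t| : ℝ) : ℂ) * cexp (I * t * (T * y)) * g (σ + I * (T * t))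
      = ∫ u in Ioi (0:ℝ), (h u : ℂ) * (Real.exp (-σ * u) : ℂ) * (fejK (T * (u - y)) : ℂ) := by
  have hB0 : 0 ≤ B := (abs_nonneg _).trans (hB 0)
  have e1 : ∀ t : ℝ, ((1 - |t| : ℝ) : ℂ) * cexp (I * t * (T * y)) * g (σ + I * (T * t))
      = ∫ u in Ioi (0:ℝ), ((1 - |t| : ℝ) : ℂ) * cexp (I * t * (T * y)) *
          ((h u : ℂ) * cexp (-(σ + I * (T * t)) * u)) := by
    intro t
    rw [integral_const_mul, hlap]
    simp [hσ]
  simp_rw [e1]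
  rw [intervalIntegral_integral_swap]
  · apply integral_congr_ae
    have hne : ∀ᵐ u ∂(volume.restrict (Ioi (0:ℝ))), u ≠ y := by
      apply ae_restrict_of_ae
      exact (measure_eq_zero_iff_ae_notMem (s := {y})).1 (by simp) |>.mono (by simp)
    filter_upwards [hne] with u hu
    rw [← fejK_fourier (T * (u - y)) (mul_ne_zero hT.ne' (sub_ne_zero.2 hu))]
    rw [← intervalIntegral.integral_const_mul]
    congr 1
    ext t
    have : cexp (-(σ + I * (T * t)) * u) * cexp (I * t * (T * y))
        = (Real.exp (-σ * u) : ℂ) * cexp (-(I * t * ((T * (u - y) : ℝ) : ℂ))) := by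
      push_cast
      rw [← Complex.exp_add, ← Complex.exp_add]
      congr 1; ring
    linear_combination ((1 - |t| : ℝ) : ℂ) * (h u : ℂ) * this
  · have hfin : IsFiniteMeasure (volume.restrict (uIoc (-1:ℝ) 1)) := by
      rw [uIoc_of_le (by norm_num)]; infer_instance
    have h1 : Integrable (fun p : ℝ × ℝ => B * Real.exp (-σ * p.2))
        ((volume.restrict (uIoc (-1:ℝ) 1)).prod (volume.restrict (Ioi (0:ℝ)))) := by
      have := (integrable_const (μ := volume.restrict (uIoc (-1:ℝ) 1)) (1:ℝ)).mul_prod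
        ((integrableOn_exp_mul_Ioi (a := -σ) (by linarith) 0).const_mul B)
      simpa using this
    refine h1.mono' ?_ ?_
    · apply Measurable.aestronglyMeasurable
      simp only [Function.uncurry_def]
      fun_prop
    · rw [Measure.prod_restrict]
      refine (ae_restrict_mem (measurableSet_uIoc.prod measurableSet_Ioi)).mono ?_
      rintro ⟨t, u⟩ ⟨ht, hu⟩
      rw [uIoc_of_le (by norm_num)] at ht
      simp only [Function.uncurry_def, norm_mul, Complex.norm_exp, Complex.norm_real, Real.norm_eq_abs]
      have a1 : |(1 - |t|)| ≤ 1 := by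
        have : |t| ≤ 1 := abs_le.2 ⟨ht.1.le, ht.2⟩
        rw [abs_le]; constructor <;> linarith [abs_nonneg t]
      have a2 : (I * (t:ℂ) * (T * y)).re = 0 := by simp
      have a3 : (-((σ:ℂ) + I * (T * t)) * u).re = -σ * u := by simp
      rw [a2, a3, Real.exp_zero, mul_one]
      calc |(1 - |t|)| * (|h u| * Real.exp (-σ * u)) ≤ 1 * (B * Real.exp (-σ * u)) := by
            gcongr; exact hB u
        _ = _ := by simp

lemma wi_limit (h : ℝ → ℝ) (hm : Measurable h) (B : ℝ) (hB : ∀ u, |h u| ≤ B) (g : ℂ → ℂ)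
    (hg : ContinuousOn g {z | 0 ≤ z.re})
    (hlap : ∀ z : ℂ, 0 < z.re → ∫ u in Ioi (0:ℝ), (h u : ℂ) * cexp (-z * u) = g z)
    (T : ℝ) (hT : 0 < T) (y : ℝ) :
    ∫ t in (-1:ℝ)..1, ((1 - |t| : ℝ) : ℂ) * cexp (I * t * (T * y)) * g (I * (T * t))
      = ∫ u in Ioi (0:ℝ), (h u : ℂ) * (fejK (T * (u - y)) : ℂ) := by
  have hB0 : 0 ≤ B := (abs_nonneg _).trans (hB 0)
  have hKi : Integrable (fun u => fejK (T * (u - y))) := by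
    have := (fejK_integrable.comp_mul_left' hT.ne').comp_sub_right y
    exact this
  -- right side
  have hR : Tendsto (fun σ : ℝ => ∫ u in Ioi (0:ℝ), (h u : ℂ) * (Real.exp (-σ * u) : ℂ) * (fejK (T * (u - y)) : ℂ))
      (𝓝[>] 0) (𝓝 (∫ u in Ioi (0:ℝ), (h u : ℂ) * (fejK (T * (u - y)) : ℂ))) := by
    apply tendsto_integral_filter_of_dominated_convergence (fun u => B * fejK (T * (u - y)))
    · refine Eventually.of_forall fun σ => ?_
      apply Measurable.aestronglyMeasurable
      have := fejK_measurable
      fun_prop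
    · filter_upwards [self_mem_nhdsWithin] with σ hσ
      refine (ae_restrict_mem measurableSet_Ioi).mono fun u hu => ?_
      have hu' : 0 < u := hu
      have hσ' : 0 < σ := hσ
      simp only [norm_mul, Complex.norm_real, Real.norm_eq_abs]
      rw [abs_of_nonneg (fejK_nonneg _), Real.abs_exp]
      have : Real.exp (-σ * u) ≤ 1 := Real.exp_le_one_iff.2 (by nlinarith)
      calc |h u| * Real.exp (-σ * u) * fejK (T * (u - y)) ≤ B * 1 * fejK (T * (u - y)) := by
            have := fejK_nonneg (T * (u - y))
            gcongr; exact hB u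
        _ = _ := by ring
    · exact (hKi.const_mul B).integrableOn
    · refine Eventually.of_forall fun u => ?_
      have : Tendsto (fun σ : ℝ => (h u : ℂ) * (Real.exp (-σ * u) : ℂ) * (fejK (T * (u - y)) : ℂ)) (𝓝 0)
          (𝓝 ((h u : ℂ) * (Real.exp (-0 * u) : ℂ) * (fejK (T * (u - y)) : ℂ))) := by
        apply Continuous.tendsto
        fun_prop
      simp only [neg_zero, zero_mul, Real.exp_zero, Complex.ofReal_one, mul_one] at this
      exact this.mono_left nhdsWithin_le_nhds
  -- left side
  obtain ⟨C, hC⟩ : ∃ C, ∀ p ∈ Icc (0:ℝ) 1 ×ˢ Icc (-1:ℝ) 1, ‖g (p.1 + I * (T * p.2))‖ ≤ C := by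
    apply IsCompact.exists_bound_of_continuousOn (isCompact_Icc.prod isCompact_Icc)
    refine hg.comp (by fun_prop) ?_
    rintro ⟨a, b⟩ ⟨ha, hb⟩
    simpa using ha.1
  have hL : Tendsto (fun σ : ℝ => ∫ t in (-1:ℝ)..1, ((1 - |t| : ℝ) : ℂ) * cexp (I * t * (T * y)) * g (σ + I * (T * t)))
      (𝓝[>] 0) (𝓝 (∫ t in (-1:ℝ)..1, ((1 - |t| : ℝ) : ℂ) * cexp (I * t * (T * y)) * g (I * (T * t)))) := by
    have hsm : Ioo (0:ℝ) 1 ∈ 𝓝[>] (0:ℝ) := Ioo_mem_nhdsGT one_pos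
    apply intervalIntegral.tendsto_integral_filter_of_dominated_convergence (fun _ => C)
    · filter_upwards [hsm] with σ hσ
      apply ContinuousOn.aestronglyMeasurable _ measurableSet_uIoc
      apply ContinuousOn.mul (by fun_prop)
      refine hg.comp (by fun_prop) ?_
      intro t ht
      simpa using hσ.1.le
    · filter_upwards [hsm] with σ hσ
      refine Eventually.of_forall fun t ht => ?_
      rw [uIoc_of_le (by norm_num)] at ht
      have hg' := hC (σ, t) ⟨⟨hσ.1.le, hσ.2.le⟩, ⟨ht.1.le, ht.2⟩⟩
      simp only [norm_mul, Complex.norm_exp, Complex.norm_real, Real.norm_eq_abs]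
      have a1 : |(1 - |t|)| ≤ 1 := by
        have : |t| ≤ 1 := abs_le.2 ⟨ht.1.le, ht.2⟩
        rw [abs_le]; constructor <;> linarith [abs_nonneg t]
      have a2 : (I * (t:ℂ) * (T * y)).re = 0 := by simp
      rw [a2, Real.exp_zero, mul_one]
      calc |(1 - |t|)| * ‖g (σ + I * (T * t))‖ ≤ 1 * C := by gcongr
        _ = C := one_mul C
    · exact intervalIntegrable_const
    · refine Eventually.of_forall fun t ht => ?_
      apply Tendsto.const_mul
      have h0 : ContinuousWithinAt g {z | 0 ≤ z.re} (I * (T * t)) := hg _ (by simp)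
      have : Tendsto (fun σ : ℝ => (σ:ℂ) + I * (T * t)) (𝓝[>] 0) (𝓝[{z | 0 ≤ z.re}] (I * (T * t))) := by
        apply tendsto_nhdsWithin_iff.2
        constructor
        · have : Tendsto (fun σ : ℝ => (σ:ℂ) + I * (T * t)) (𝓝 0) (𝓝 (((0:ℝ):ℂ) + I * (T * t))) := by
            apply Continuous.tendsto; fun_prop
          rw [Complex.ofReal_zero, zero_add] at this
          exact this.mono_left nhdsWithin_le_nhds
        · filter_upwards [hsm] with σ hσ
          simpa using hσ.1.le
      exact h0.tendsto.comp this
  refine tendsto_nhds_unique hL (hR.congr' ?_)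
  filter_upwards [self_mem_nhdsWithin] with σ hσ
  exact (wi_fubini h hm B hB g hlap T hT σ hσ y).symm

lemma wi_RL (g : ℂ → ℂ) (T : ℝ) (hT : 0 < T) :
    Tendsto (fun y : ℝ => ∫ t in (-1:ℝ)..1, ((1 - |t| : ℝ) : ℂ) * cexp (I * t * (T * y)) * g (I * (T * t)))
      atTop (𝓝 0) := by
  have h1 := Real.tendsto_integral_exp_smul_cocompact
    (indicator (Ioc (-1:ℝ) 1) (fun t : ℝ => ((1 - |t| : ℝ) : ℂ) * g (I * (T * t))))
  have h2 : Tendsto (fun y : ℝ => -(T * y) / (2 * Real.pi)) atTop (cocompact ℝ) := by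
    refine Tendsto.mono_right ?_ atBot_le_cocompact
    apply Tendsto.atBot_div_const (by positivity)
    exact tendsto_neg_atTop_atBot.comp (tendsto_id.const_mul_atTop hT)
  refine (h1.comp h2).congr fun y => ?_
  simp only [Function.comp]
  rw [intervalIntegral.integral_of_le (by norm_num), ← integral_indicator measurableSet_Ioc]
  congr 1
  ext t
  by_cases ht : t ∈ Ioc (-1:ℝ) 1
  · simp only [indicator_of_mem ht]
    rw [Circle.smul_def, Real.fourierChar_apply, smul_eq_mul]
    have : (((2 * Real.pi * -(t * (-(T * y) / (2 * Real.pi))) : ℝ) : ℂ) * I) = I * t * (T * y) := by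
      have : (2 * Real.pi * -(t * (-(T * y) / (2 * Real.pi))) : ℝ) = t * (T * y) := by
        field_simp
      rw [this]; push_cast; ring
    rw [this]; ring
  · simp only [indicator_of_notMem ht, smul_zero]

end WI

section WI2

lemma wi_conv (H : ℝ → ℝ) (hm : Measurable H) (B : ℝ) (hB : ∀ u, |H u| ≤ B) 
    (hH0 : ∀ u ≤ 0, H u = 0) (g : ℂ → ℂ)
    (hg : ContinuousOn g {z | 0 ≤ z.re})
    (hlap : ∀ z : ℂ, 0 < z.re →
      ∫ u in Ioi (0:ℝ), ((H u - 1 : ℝ) : ℂ) * Complex.exp (-z * u) = g z)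
    (T : ℝ) (hT : 0 < T) :
    Tendsto (fun y => ∫ v, H (y + v / T) * fejK v) atTop (𝓝 (∫ v, fejK v)) := by
  have hB1 : ∀ u, |H u - 1| ≤ B + 1 := fun u => by
    have := hB u; rw [abs_le] at *; constructor <;> linarith
  have h1 := wi_RL g T hT
  have hKi : ∀ y, Integrable (fun u => fejK (T * (u - y))) := fun y => by
    have := (fejK_integrable.comp_mul_left' hT.ne').comp_sub_right y
    exact this
  have h2 : Tendsto (fun y => ∫ u in Ioi (0:ℝ), (H u - 1) * fejK (T * (u - y))) atTop (𝓝 0) := by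
    have : Tendsto (fun y => ((∫ u in Ioi (0:ℝ), (H u - 1) * fejK (T * (u - y)) : ℝ) : ℂ)) atTop (𝓝 ((0:ℝ):ℂ)) := by
      rw [Complex.ofReal_zero]
      refine h1.congr fun y => ?_
      rw [wi_limit (fun u => H u - 1) (by fun_prop) (B + 1) hB1 g hg hlap T hT y, ← integral_complex_ofReal]
      simp
    exact (Complex.continuous_re.tendsto _).comp this
  have h3 : ∀ y, ∫ u in Ioi (0:ℝ), fejK (T * (u - y)) = T⁻¹ * ∫ v in Ioi (-(T * y)), fejK v := by
    intro y
    have e1 : ∫ u in Ioi (0:ℝ), fejK (T * (u - y)) = ∫ u in Ioi (-y), fejK (T * u) := by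
      rw [← integral_indicator measurableSet_Ioi, ← integral_indicator measurableSet_Ioi,
        ← integral_sub_right_eq_self (fun u => indicator (Ioi (-y)) (fun u => fejK (T * u)) u) y]
      congr 1; ext u
      simp only [indicator, mem_Ioi]
      congr 1
      simp
    rw [e1, integral_comp_mul_left_Ioi _ _ hT]
    simp
  have h4 : Tendsto (fun y : ℝ => ∫ v in Ioi (-(T * y)), fejK v) atTop (𝓝 (∫ v, fejK v)) := by
    have : AECover volume (atTop : Filter ℝ) (fun y => Ioi (-(T * y))) :=
      aecover_Ioi (tendsto_neg_atTop_atBot.comp (tendsto_id.const_mul_atTop hT))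
    exact this.integral_tendsto_of_countably_generated fejK_integrable
  have hHi : ∀ y, Integrable (fun u => H u * fejK (T * (u - y))) := fun y =>
    (hKi y).bdd_mul hm.aestronglyMeasurable (c := B) (Eventually.of_forall fun u => hB u)
  have h5 : ∀ y, ∫ v, H (y + v / T) * fejK v =
      T * (∫ u in Ioi (0:ℝ), (H u - 1) * fejK (T * (u - y))) + ∫ v in Ioi (-(T * y)), fejK v := by
    intro y
    have e1 : ∫ u in Ioi (0:ℝ), (H u - 1) * fejK (T * (u - y)) =
        (∫ u in Ioi (0:ℝ), H u * fejK (T * (u - y))) - ∫ u in Ioi (0:ℝ), fejK (T * (u - y)) := by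
      rw [← integral_sub (hHi y).integrableOn (hKi y).integrableOn]
      congr 1; ext u; ring
    have e2 : ∫ u in Ioi (0:ℝ), H u * fejK (T * (u - y)) = ∫ u, H u * fejK (T * (u - y)) := by
      apply setIntegral_eq_integral_of_forall_compl_eq_zero
      intro u hu
      rw [hH0 u (not_lt.1 hu), zero_mul]
    have e3 : ∫ u, H u * fejK (T * (u - y)) = T⁻¹ * ∫ v, H (y + v / T) * fejK v := by
      rw [← integral_add_right_eq_self (fun u => H u * fejK (T * (u - y))) y]
      have := Measure.integral_comp_mul_left (fun v => H (y + v / T) * fejK v) T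
      rw [abs_of_pos (inv_pos.2 hT), smul_eq_mul] at this
      rw [← this]
      congr 1; ext u
      rw [mul_div_cancel_left₀ _ hT.ne', add_comm]; simp
    rw [e1, e2, e3, h3]
    field_simp
    ring
  simp_rw [h5]
  simpa using (h2.const_mul T).add h4

lemma wi_tauber (H : ℝ → ℝ) (hm : Measurable H) (B : ℝ) (hB : ∀ u, |H u| ≤ B) (hH : ∀ u, 0 ≤ H u)
    (hmono : ∀ u v, u ≤ v → H u * Real.exp u ≤ H v * Real.exp v)
    (hconv : ∀ T > 0, Tendsto (fun y => ∫ v, H (y + v / T) * fejK v) atTop (𝓝 (∫ v, fejK v))) :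
    Tendsto H atTop (𝓝 1) := by
  set c := ∫ v, fejK v with hc
  have hc0 : 0 < c := fejK_int_pos
  have hB0 : 0 ≤ B := (abs_nonneg _).trans (hB 0)
  set cR : ℝ → ℝ := fun R => ∫ v in Icc (-R) R, fejK v with hcR
  have hcRlim : Tendsto (fun δ : ℝ => cR (δ⁻¹)) (𝓝[>] 0) (𝓝 c) := by
    have : AECover volume (atTop : Filter ℝ) (fun R => Icc (-R) R) :=
      aecover_Icc tendsto_neg_atTop_atBot tendsto_id
    exact (this.integral_tendsto_of_countably_generated fejK_integrable).comp tendsto_inv_nhdsGT_zero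
  have hHi : ∀ y T, Integrable (fun v => H (y + v / T) * fejK v) := fun y T =>
    fejK_integrable.bdd_mul (by apply Measurable.aestronglyMeasurable; fun_prop) (c := B)
      (Eventually.of_forall fun u => hB _)
  -- key inequalities
  have key1 : ∀ δ > 0, ∀ y, H y * Real.exp (-(2 * δ)) * cR δ⁻¹ ≤ ∫ v, H (y + δ + v / (δ⁻¹ ^ 2)) * fejK v := by
    intro δ hδ y
    have : H y * Real.exp (-(2 * δ)) * cR δ⁻¹ = ∫ v in Icc (-δ⁻¹) δ⁻¹, H y * Real.exp (-(2 * δ)) * fejK v := by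
      rw [integral_const_mul]
    rw [this]
    refine le_trans (setIntegral_mono_on (g := fun v => H (y + δ + v / (δ⁻¹ ^ 2)) * fejK v)
      (fejK_integrable.const_mul _).integrableOn (hHi _ _).integrableOn measurableSet_Icc ?_) ?_
    · intro v hv
      apply mul_le_mul_of_nonneg_right _ (fejK_nonneg v)
      have hv1 : v / (δ⁻¹ ^ 2) = v * δ * δ := by field_simp
      have a1 : -1 ≤ v * δ := by
        have := mul_le_mul_of_nonneg_right hv.1 hδ.le
        rwa [neg_mul, inv_mul_cancel₀ hδ.ne'] at this
      have a2 : v * δ ≤ 1 := by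
        have := mul_le_mul_of_nonneg_right hv.2 hδ.le
        rwa [inv_mul_cancel₀ hδ.ne'] at this
      rw [hv1]
      set w := y + δ + v * δ * δ
      have b1 : y ≤ w := by simp only [w]; nlinarith
      have b2 : w ≤ y + 2 * δ := by simp only [w]; nlinarith
      have := hmono y w b1
      calc H y * Real.exp (-(2 * δ)) = (H y * Real.exp y) * Real.exp (-(2 * δ) - y) := by
            rw [mul_assoc, ← Real.exp_add]; congr 2; ring
        _ ≤ (H w * Real.exp w) * Real.exp (-(2 * δ) - y) := by gcongr
        _ = H w * Real.exp (w - y - 2 * δ) := by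
            rw [mul_assoc, ← Real.exp_add]; congr 2; ring
        _ ≤ H w * 1 := by
            apply mul_le_mul_of_nonneg_left _ (hH w)
            rw [Real.exp_le_one_iff]; linarith
        _ = H w := mul_one _
    · exact setIntegral_le_integral (hHi _ _) (Eventually.of_forall fun v => mul_nonneg (hH _) (fejK_nonneg _))
  have key2 : ∀ δ > 0, ∀ y, (∫ v, H (y - δ + v / (δ⁻¹ ^ 2)) * fejK v) ≤
      H y * Real.exp (2 * δ) * cR δ⁻¹ + B * (c - cR δ⁻¹) := by
    intro δ hδ y
    have hs : MeasurableSet (Icc (-δ⁻¹) δ⁻¹) := measurableSet_Icc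
    rw [← integral_add_compl hs (hHi _ _)]
    have hcc : c - cR δ⁻¹ = ∫ v in (Icc (-δ⁻¹) δ⁻¹)ᶜ, fejK v := by
      rw [hc, ← integral_add_compl hs fejK_integrable]; simp [hcR]
    rw [hcc, ← integral_const_mul, ← integral_const_mul]
    apply add_le_add
    · refine setIntegral_mono_on (hHi _ _).integrableOn 
        (fejK_integrable.const_mul _).integrableOn measurableSet_Icc ?_
      intro v hv
      apply mul_le_mul_of_nonneg_right _ (fejK_nonneg v)
      have hv1 : v / (δ⁻¹ ^ 2) = v * δ * δ := by field_simp
      have a1 : -1 ≤ v * δ := by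
        have := mul_le_mul_of_nonneg_right hv.1 hδ.le
        rwa [neg_mul, inv_mul_cancel₀ hδ.ne'] at this
      have a2 : v * δ ≤ 1 := by
        have := mul_le_mul_of_nonneg_right hv.2 hδ.le
        rwa [inv_mul_cancel₀ hδ.ne'] at this
      rw [hv1]
      set w := y - δ + v * δ * δ
      have b1 : w ≤ y := by simp only [w]; nlinarith
      have b2 : y - 2 * δ ≤ w := by simp only [w]; nlinarith
      have := hmono w y b1
      calc H w = (H w * Real.exp w) * Real.exp (- w) := by
            rw [mul_assoc, ← Real.exp_add]; simp
        _ ≤ (H y * Real.exp y) * Real.exp (- w) := by gcongr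
        _ = H y * Real.exp (y - w) := by
            rw [mul_assoc, ← Real.exp_add]; congr 2
        _ ≤ H y * Real.exp (2 * δ) := by
            apply mul_le_mul_of_nonneg_left _ (hH y)
            rw [Real.exp_le_exp]; linarith
    · refine setIntegral_mono_on (hHi _ _).integrableOn 
        (fejK_integrable.const_mul _).integrableOn hs.compl ?_
      intro v hv
      apply mul_le_mul_of_nonneg_right _ (fejK_nonneg v)
      exact (le_abs_self _).trans (hB _)
  have hexp : Tendsto (fun δ : ℝ => Real.exp (2 * δ)) (𝓝[>] 0) (𝓝 1) := by
    have : Tendsto (fun δ : ℝ => Real.exp (2 * δ)) (𝓝 0) (𝓝 (Real.exp (2 * 0))) := by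
      apply Continuous.tendsto; fun_prop
    simp only [mul_zero, Real.exp_zero] at this
    exact this.mono_left nhdsWithin_le_nhds
  have hid : Tendsto (fun δ : ℝ => δ) (𝓝[>] 0) (𝓝 0) := nhdsWithin_le_nhds
  have hpos : ∀ᶠ δ : ℝ in 𝓝[>] 0, 0 < cR δ⁻¹ := hcRlim.eventually (lt_mem_nhds hc0)
  rw [tendsto_order]
  constructor
  · intro a ha
    have hl : Tendsto (fun δ : ℝ => (c - δ - B * (c - cR δ⁻¹)) / (cR δ⁻¹ * Real.exp (2 * δ))) (𝓝[>] 0) (𝓝 1) := by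
      have := ((tendsto_const_nhds (x := c)).sub hid).sub (((tendsto_const_nhds (x := c)).sub hcRlim).const_mul B)
      have := this.div (hcRlim.mul hexp) (by simp [hc0.ne'])
      simpa [hc0.ne', Pi.div_def] using this
    obtain ⟨δ, h1, h2, h3⟩ := ((hl.eventually (lt_mem_nhds ha)).and (hpos.and self_mem_nhdsWithin)).exists
    have hδ : 0 < δ := h3
    have h4 := (hconv (δ⁻¹ ^ 2) (by positivity)).comp (tendsto_atTop_add_const_right atTop (-δ) tendsto_id)
    filter_upwards [h4.eventually (lt_mem_nhds (show c - δ < c by linarith))] with y hy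
    have h5 := key2 δ hδ y
    simp only [Function.comp, id, ← sub_eq_add_neg] at hy
    refine lt_of_lt_of_le h1 ?_
    rw [div_le_iff₀ (by positivity)]
    linarith
  · intro a ha
    have hl : Tendsto (fun δ : ℝ => (c + δ) * Real.exp (2 * δ) / (cR δ⁻¹)) (𝓝[>] 0) (𝓝 1) := by
      have := (((tendsto_const_nhds (x := c)).add hid).mul hexp).div hcRlim hc0.ne'
      simpa [hc0.ne', Pi.div_def] using this
    obtain ⟨δ, h1, h2, h3⟩ := ((hl.eventually (gt_mem_nhds ha)).and (hpos.and self_mem_nhdsWithin)).exists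
    have hδ : 0 < δ := h3
    have h4 := (hconv (δ⁻¹ ^ 2) (by positivity)).comp (tendsto_atTop_add_const_right atTop δ tendsto_id)
    filter_upwards [h4.eventually (gt_mem_nhds (show c < c + δ by linarith))] with y hy
    have h5 := key1 δ hδ y
    simp only [Function.comp, id] at hy
    refine lt_of_le_of_lt ?_ h1
    rw [le_div_iff₀ h2]
    have h6 : H y * Real.exp (-(2 * δ)) * cR δ⁻¹ ≤ c + δ := by linarith
    calc H y * cR δ⁻¹ = (H y * Real.exp (-(2 * δ)) * cR δ⁻¹) * Real.exp (2 * δ) := by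
          rw [Real.exp_neg]; field_simp
      _ ≤ _ := by gcongr

end WI2

section PNT
open Complex

lemma psi_bigO : (fun n : ℕ => ∑ k ∈ Finset.Icc 1 n, ArithmeticFunction.vonMangoldt k) =O[atTop]
    fun n => (n : ℝ) ^ (1:ℝ) := by
  refine Asymptotics.IsBigO.of_bound (Real.log 4 + 4) (Eventually.of_forall fun n => ?_)
  have h1 := Chebyshev.psi_le_const_mul_self (x := n) (Nat.cast_nonneg n)
  have h2 : ∑ k ∈ Finset.Icc 1 n, ArithmeticFunction.vonMangoldt k = Chebyshev.psi n := by
    rw [Chebyshev.psi, Nat.floor_natCast]; rfl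
  rw [h2, Real.norm_of_nonneg (Chebyshev.psi_nonneg _), Real.rpow_one, Real.norm_of_nonneg (Nat.cast_nonneg n)]
  exact h1

lemma psi_laplace (z : ℂ) (hz : 0 < z.re) :
    ∫ u in Ioi (0:ℝ), ((Chebyshev.psi (Real.exp u) * Real.exp (-u) : ℝ) : ℂ) * cexp (-z * u)
      = LSeries (fun n => (ArithmeticFunction.vonMangoldt n : ℂ)) (1 + z) / (1 + z) := by
  have hs : (1:ℝ) < (1 + z).re := by simpa using hz
  have hne : (1 + z) ≠ 0 := fun h => by rw [h] at hs; simp at hs; linarith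
  rw [LSeries_eq_mul_integral_of_nonneg _ zero_le_one hs psi_bigO
    (fun n => ArithmeticFunction.vonMangoldt_nonneg), mul_div_cancel_left₀ _ hne]
  rw [← Real.exp_zero, ← integral_comp_exp_Ioi]
  apply setIntegral_congr_fun measurableSet_Ioi
  intro u _
  have h2 : ∑ k ∈ Finset.Icc 1 ⌊Real.exp u⌋₊, (ArithmeticFunction.vonMangoldt k : ℂ) = (Chebyshev.psi (Real.exp u) : ℂ) := by
    rw [Chebyshev.psi]; push_cast; rfl
  have h3 : ((Real.exp u : ℝ) : ℂ) ^ (-(1 + z + 1)) = cexp (u * (-(1 + z + 1))) := by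
    rw [Complex.ofReal_exp, Complex.cpow_def_of_ne_zero (Complex.exp_ne_zero _), ← Complex.ofReal_exp,
      ← Complex.ofReal_log (Real.exp_pos u).le, Real.log_exp]
  simp only [h2, Real.exp_zero, h3, Complex.real_smul]
  push_cast
  have : cexp (-u) * cexp (-z * u) = cexp u * cexp (u * (-(1 + z + 1))) := by
    rw [← Complex.exp_add, ← Complex.exp_add]; congr 1; ring
  linear_combination (Chebyshev.psi (Real.exp u) : ℂ) * this

lemma psi_laplace_integrable (z : ℂ) (hz : 0 < z.re) :
    IntegrableOn (fun u : ℝ => cexp (-z * u)) (Ioi 0) :=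
  integrableOn_exp_mul_complex_Ioi (by simpa using hz) 0

theorem psi_tendsto : Tendsto (fun u : ℝ => Chebyshev.psi (Real.exp u) * Real.exp (-u)) atTop (𝓝 1) := by
  set H : ℝ → ℝ := fun u => Chebyshev.psi (Real.exp u) * Real.exp (-u) with hH
  have hm : Measurable H := (Chebyshev.psi_mono.measurable.comp Real.measurable_exp).mul (by fun_prop)
  have hB : ∀ u, |H u| ≤ Real.log 4 + 4 := by
    intro u
    have h1 := Chebyshev.psi_le_const_mul_self (Real.exp_pos u).le
    rw [abs_of_nonneg (mul_nonneg (Chebyshev.psi_nonneg _) (Real.exp_pos _).le)]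
    calc Chebyshev.psi (Real.exp u) * Real.exp (-u) ≤ (Real.log 4 + 4) * Real.exp u * Real.exp (-u) := by gcongr
      _ = _ := by rw [mul_assoc, ← Real.exp_add]; simp
  set F := ArithmeticFunction.vonMangoldt.LFunctionResidueClassAux (q := 1) 1 with hF
  set g : ℂ → ℂ := fun z => (F (1 + z) - 1) / (1 + z) with hg
  have hgc : ContinuousOn g {z | 0 ≤ z.re} := by
    apply ContinuousOn.div
    · apply ContinuousOn.sub _ continuousOn_const
      refine (ArithmeticFunction.vonMangoldt.continuousOn_LFunctionResidueClassAux (q := 1) 1).comp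
        (by fun_prop) ?_
      intro z hz
      simpa using hz
    · fun_prop
    · intro z hz h
      have hz' : 0 ≤ z.re := hz
      have : (1 + z).re = 0 := by rw [h]; simp
      simp at this; linarith
  have hlap : ∀ z : ℂ, 0 < z.re →
      ∫ u in Ioi (0:ℝ), ((H u - 1 : ℝ) : ℂ) * Complex.exp (-z * u) = g z := by
    intro z hz
    have hzz : z ≠ 0 := fun h => by rw [h] at hz; simp at hz
    have hzz1 : 1 + z ≠ 0 := fun h => by
      have : (1 + z).re = 0 := by rw [h]; simp
      simp at this; linarith
    have e0 : IntegrableOn (fun u : ℝ => cexp (-z * u)) (Ioi 0) := psi_laplace_integrable z hz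
    have e1 : IntegrableOn (fun u : ℝ => (H u : ℂ) * cexp (-z * u)) (Ioi 0) := by
      refine Integrable.bdd_mul e0 (c := Real.log 4 + 4) ?_ (Eventually.of_forall fun u => ?_)
      · apply Measurable.aestronglyMeasurable; fun_prop
      · simpa using hB u
    have e2 : ∀ u : ℝ, ((H u - 1 : ℝ) : ℂ) * Complex.exp (-z * u) =
        (H u : ℂ) * cexp (-z * u) - cexp (-z * u) := by intro u; push_cast; ring
    simp_rw [e2]
    rw [integral_sub e1 e0, integral_exp_mul_complex_Ioi (by simpa using hz)]
    rw [hH]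
    rw [psi_laplace z hz]
    have e3 := ArithmeticFunction.vonMangoldt.eqOn_LFunctionResidueClassAux (q := 1) (a := 1) isUnit_one
      (show (1 + z) ∈ {s : ℂ | 1 < s.re} by simpa using hz)
    have e4 : (fun n : ℕ => ((ArithmeticFunction.vonMangoldt.residueClass (q := 1) 1 n : ℝ) : ℂ)) =
        fun n => (ArithmeticFunction.vonMangoldt n : ℂ) := by
      ext n
      congr 1
      unfold ArithmeticFunction.vonMangoldt.residueClass
      rw [indicator_of_mem]
      exact Subsingleton.elim _ _
    simp only [e4, Nat.totient_one, Nat.cast_one, inv_one] at e3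
    have e5 : LSeries (fun n => (ArithmeticFunction.vonMangoldt n : ℂ)) (1 + z) = F (1 + z) + 1 / z := by
      rw [hF, e3]; simp
    rw [e5, hg]
    simp only [Complex.ofReal_zero, mul_zero, Complex.exp_zero]
    field_simp
    ring
  apply wi_tauber H hm _ hB
  · intro u; exact mul_nonneg (Chebyshev.psi_nonneg _) (Real.exp_pos _).le
  · intro u v huv
    simp only [hH, mul_assoc, ← Real.exp_add]
    simpa using Chebyshev.psi_mono (Real.exp_le_exp.2 huv)
  · intro T hT
    refine wi_conv H hm _ hB ?_ g hgc hlap T hT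
    intro u hu
    simp only [hH]
    rw [Chebyshev.psi_eq_zero_of_le_one (Real.exp_le_one_iff.2 hu), zero_mul]

theorem psi_div_tendsto : Tendsto (fun x : ℝ => Chebyshev.psi x / x) atTop (𝓝 1) := by
  refine (psi_tendsto.comp Real.tendsto_log_atTop).congr' ?_
  filter_upwards [eventually_gt_atTop 0] with x hx
  simp only [Function.comp]
  rw [Real.exp_neg, Real.exp_log hx, div_eq_mul_inv]

theorem theta_div_tendsto : Tendsto (fun x : ℝ => Chebyshev.theta x / x) atTop (𝓝 1) := by
  have h1 : Tendsto (fun x : ℝ => (Chebyshev.psi - Chebyshev.theta) x / x) atTop (𝓝 0) := by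
    apply Asymptotics.IsLittleO.tendsto_div_nhds_zero
    refine Chebyshev.isBigO_psi_sub_theta_sqrt.trans_isLittleO ?_
    rw [Asymptotics.isLittleO_iff_tendsto' (by filter_upwards [eventually_gt_atTop 0] with x hx h; exact absurd h hx.ne')]
    refine (tendsto_inv_atTop_zero.comp Real.tendsto_sqrt_atTop).congr' ?_
    filter_upwards [eventually_gt_atTop 0] with x hx
    simp only [Function.comp]
    rw [eq_div_iff hx.ne', inv_mul_eq_div, Real.div_sqrt]
  have := psi_div_tendsto.sub h1
  rw [sub_zero] at this
  refine this.congr fun x => ?_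
  simp only [Pi.sub_apply]; ring

/-- The prime number theorem. -/
theorem pnt : Tendsto (fun x : ℝ => (Nat.primeCounting ⌊x⌋₊ : ℝ) * Real.log x / x) atTop (𝓝 1) := by
  have h0 : (fun x : ℝ => (Nat.primeCounting ⌊x⌋₊ : ℝ) - Chebyshev.theta x / Real.log x) =o[atTop]
      (fun x => x / Real.log x) := by
    refine Chebyshev.primeCounting_sub_theta_div_log_isBigO.trans_isLittleO ?_
    rw [Asymptotics.isLittleO_iff_tendsto']
    · have := tendsto_inv_atTop_zero.comp Real.tendsto_log_atTop
      refine this.congr' ?_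
      filter_upwards [eventually_gt_atTop 1] with x hx
      have := Real.log_pos hx
      simp only [Function.comp]; field_simp
    · filter_upwards [eventually_gt_atTop 1] with x hx h
      have := Real.log_pos hx
      have h2 : 0 < x / Real.log x := by positivity
      exact absurd h h2.ne'
  have := theta_div_tendsto.add h0.tendsto_div_nhds_zero
  rw [add_zero] at this
  refine this.congr' ?_
  filter_upwards [eventually_gt_atTop 1] with x hx
  have := Real.log_pos hx
  field_simp
  ring

theorem pi_ratio (m : ℕ) (hm : 1 ≤ m) :
    Tendsto (fun n : ℕ => (Nat.primeCounting (n / m) : ℝ) / (Nat.primeCounting n : ℝ)) atTop (𝓝 (1 / m)) := by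
  have hm0 : (0:ℝ) < m := by exact_mod_cast hm
  have h1 : Tendsto (fun n : ℕ => (Nat.primeCounting n : ℝ) * Real.log n / n) atTop (𝓝 1) := by
    refine (pnt.comp tendsto_natCast_atTop_atTop).congr fun n => ?_
    simp [Function.comp]
  have hd : Tendsto (fun n : ℕ => (n:ℝ) / m) atTop atTop := 
    Tendsto.atTop_div_const hm0 tendsto_natCast_atTop_atTop
  have h2 : Tendsto (fun n : ℕ => (Nat.primeCounting (n / m) : ℝ) * Real.log (n / m) / (n / m)) atTop (𝓝 1) := by
    refine (pnt.comp hd).congr fun n => ?_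
    simp [Function.comp, Nat.floor_div_natCast]
  have hlog : Tendsto (fun n : ℕ => Real.log n) atTop atTop := Real.tendsto_log_atTop.comp tendsto_natCast_atTop_atTop
  have h3 : Tendsto (fun n : ℕ => Real.log (n / m) / Real.log n) atTop (𝓝 1) := by
    have : Tendsto (fun n : ℕ => 1 - Real.log m / Real.log n) atTop (𝓝 (1 - 0)) :=
      tendsto_const_nhds.sub (hlog.const_div_atTop _)
    rw [sub_zero] at this
    refine this.congr' ?_
    filter_upwards [hlog.eventually_gt_atTop 0, eventually_gt_atTop 0] with n hn hn0
    have : (n:ℝ) ≠ 0 := by positivity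
    rw [Real.log_div this hm0.ne']
    field_simp
  have h4 := ((h2.div h3 one_ne_zero).div h1 one_ne_zero).div_const (m:ℝ)
  simp only [div_one] at h4
  refine h4.congr' ?_
  filter_upwards [hlog.eventually_gt_atTop 0, hd.eventually_gt_atTop 1, eventually_gt_atTop 0,
    h1.eventually (lt_mem_nhds one_pos)] with n hn hn1 hn0 hn2
  have a1 := Real.log_pos hn1
  have a2 : (0:ℝ) < n := by exact_mod_cast hn0
  have a3 : (Nat.primeCounting n : ℝ) ≠ 0 := by
    intro h; rw [h] at hn2; simp at hn2
  simp only [Pi.div_apply]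
  field_simp
end PNT

noncomputable def fG (G : SimpleGraph ℕ) (m : ℕ) : ℕ := eOn G m + m + 1

lemma eOn_le (G : SimpleGraph ℕ) (m : ℕ) : eOn G m ≤ m * m := by
  unfold eOn
  refine (Finset.card_filter_le _ _).trans ?_
  simp

lemma fG_le (G : SimpleGraph ℕ) (m : ℕ) : fG G m ≤ (m + 1) ^ 2 := by
  have := eOn_le G m
  unfold fG; nlinarith

lemma fG_pos (G : SimpleGraph ℕ) (m : ℕ) : 1 ≤ fG G m := by unfold fG; omega

noncomputable def aG (G : SimpleGraph ℕ) (m : ℕ) : ℝ :=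
  Real.log (fG G m) / ((m : ℝ) ^ 2 + m)

lemma aG_nonneg (G : SimpleGraph ℕ) (m : ℕ) : 0 ≤ aG G m := by
  unfold aG
  have : (1 : ℝ) ≤ fG G m := by exact_mod_cast fG_pos G m
  have := Real.log_nonneg this
  positivity

noncomputable def cB (m : ℕ) : ℝ := 8 * (1 / ((m : ℝ)) ^ (3 / 2 : ℝ))

lemma cB_summable : Summable cB :=
  (Real.summable_one_div_nat_rpow.2 (by norm_num)).mul_left 8

lemma aG_le (G : SimpleGraph ℕ) (m : ℕ) : aG G m ≤ cB m := by
  unfold aG cB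
  rcases Nat.eq_zero_or_pos m with rfl | hm
  · simp
  have hm' : (1 : ℝ) ≤ m := by exact_mod_cast hm
  have h0 : (fG G m : ℝ) ≤ ((m : ℝ) + 1) ^ 2 := by exact_mod_cast fG_le G m
  have h00 : (1 : ℝ) ≤ fG G m := by exact_mod_cast fG_pos G m
  have h1 : Real.log (fG G m) ≤ 2 * Real.log ((m : ℝ) + 1) := by
    refine (Real.log_le_log (by linarith) h0).trans ?_
    rw [Real.log_pow]; simp
  have h2 : Real.log ((m : ℝ) + 1) ≤ ((m : ℝ) + 1) ^ (1 / 2 : ℝ) / (1 / 2) :=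
    Real.log_le_rpow_div (by positivity) (by norm_num)
  have h3 : ((m : ℝ) + 1) ^ (1 / 2 : ℝ) ≤ 2 * (m : ℝ) ^ (1 / 2 : ℝ) := by
    rw [← Real.sqrt_eq_rpow, ← Real.sqrt_eq_rpow]
    rw [Real.sqrt_le_left (by positivity), mul_pow, Real.sq_sqrt (by positivity)]
    linarith
  have h4 : (m : ℝ) ^ (1 / 2 : ℝ) * (m : ℝ) ^ (3 / 2 : ℝ) = (m : ℝ) ^ 2 := by
    rw [← Real.rpow_add (by positivity), ← Real.rpow_natCast]; norm_num
  have h5 : (0 : ℝ) < (m : ℝ) ^ (3 / 2 : ℝ) := by positivity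
  rw [mul_one_div, div_le_div_iff₀ (by positivity) h5]
  have h6 : Real.log (fG G m) ≤ 8 * (m : ℝ) ^ (1 / 2 : ℝ) := by linarith
  calc Real.log (fG G m) * (m : ℝ) ^ (3 / 2 : ℝ) ≤ 8 * (m : ℝ) ^ (1 / 2 : ℝ) * (m : ℝ) ^ (3 / 2 : ℝ) := by gcongr
    _ = 8 * (m : ℝ) ^ 2 := by rw [mul_assoc, h4]
    _ ≤ _ := by nlinarith

lemma aG_summable (G : SimpleGraph ℕ) : Summable (aG G) :=
  cB_summable.of_nonneg_of_le (aG_nonneg G) (aG_le G)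

lemma aG_zero (G : SimpleGraph ℕ) : aG G 0 = 0 := by simp [aG]

lemma gProd_eq (G : SimpleGraph ℕ) : gProd G = Real.exp (∑' m, aG G m) := by
  rw [(aG_summable G).tsum_eq_zero_add, aG_zero, zero_add]
  have hs := ((summable_nat_add_iff 1).2 (aG_summable G)).hasSum.rexp
  rw [← hs.tprod_eq]
  unfold gProd
  congr 1
  ext m
  rw [Real.rpow_def_of_pos (by positivity)]
  simp only [Function.comp, aG, fG]
  push_cast
  rw [mul_one_div]

lemma gProd_bdd (k : ℕ) : BddAbove {x : ℝ | ∃ G : SimpleGraph ℕ, KProductFree k G ∧ x = gProd G} := by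
  refine ⟨Real.exp (∑' m, cB m), ?_⟩
  rintro x ⟨G, -, rfl⟩
  rw [gProd_eq]
  exact Real.exp_le_exp.2 ((aG_summable G).tsum_le_tsum (aG_le G) cB_summable)

lemma kpf_bot (k : ℕ) : KProductFree k (⊥ : SimpleGraph ℕ) := by
  refine ⟨by simp, ?_⟩
  rintro ⟨x, y, -, ⟨a, b, h, -⟩, -⟩
  simp at h

lemma gProd_le_betaK {k : ℕ} {G : SimpleGraph ℕ} (h : KProductFree k G) : gProd G ≤ betaK k :=
  le_csSup (gProd_bdd k) ⟨G, h, rfl⟩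

lemma betaK_pos (k : ℕ) : 0 < betaK k :=
  lt_of_lt_of_le (by rw [gProd_eq]; exact Real.exp_pos _) (gProd_le_betaK (kpf_bot k))

lemma ratio_inv {G : SimpleGraph ℕ} {x : ℚ} (h : x ∈ ratioSet G) : x⁻¹ ∈ ratioSet G := by
  obtain ⟨a, b, hab, rfl⟩ := h
  exact ⟨b, a, hab.symm, by simp⟩

lemma ratio_ne {G : SimpleGraph ℕ} (hG : ∀ a b : ℕ, G.Adj a b → 0 < a) {x : ℚ}
    (h : x ∈ ratioSet G) : x ≠ 0 := by
  obtain ⟨a, b, hab, rfl⟩ := h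
  have := hG _ _ hab
  have := hG _ _ hab.symm
  positivity

lemma kpf_iff {k : ℕ} (hk : 1 ≤ k) (G : SimpleGraph ℕ) : KProductFree k G ↔
    (∀ a b : ℕ, G.Adj a b → 0 < a) ∧ ∀ x : Fin k → ℚ, (∀ i, x i ∈ ratioSet G) → ∏ i, x i ≠ 1 := by
  obtain ⟨j, rfl⟩ : ∃ j, k = j + 1 := ⟨k - 1, by omega⟩
  unfold KProductFree
  rw [show j + 1 - 1 = j from rfl]
  refine and_congr_right fun hG => ⟨fun h x hx h1 => ?_, ?_⟩
  · apply h
    refine ⟨fun i => x i.castSucc, (x (Fin.last j))⁻¹, fun i => hx _, ratio_inv (hx _), ?_⟩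
    rw [Fin.prod_univ_castSucc] at h1
    exact eq_inv_of_mul_eq_one_left h1
  · rintro h ⟨x, y, hx, hy, hxy⟩
    refine h (Fin.snoc x y⁻¹) ?_ ?_
    · intro i
      refine Fin.lastCases ?_ (fun i => ?_) i
      · simpa using ratio_inv hy
      · simpa using hx i
    · rw [Fin.prod_univ_castSucc]
      simp only [Fin.snoc_castSucc, Fin.snoc_last]
      rw [hxy, mul_inv_cancel₀ (ratio_ne hG hy)]

lemma kpf_step {k : ℕ} (hk : 1 ≤ k) {G : SimpleGraph ℕ} (h : KProductFree (k + 2) G) :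
    KProductFree k G := by
  rw [kpf_iff (by omega)] at h ⊢
  refine ⟨h.1, fun x hx h1 => ?_⟩
  set y := x ⟨0, hk⟩ with hy
  have hyR : y ∈ ratioSet G := hx _
  refine h.2 (Fin.cons y (Fin.cons y⁻¹ x)) ?_ ?_
  · intro i
    refine Fin.cases ?_ (fun i => ?_) i
    · simpa using hyR
    · refine Fin.cases ?_ (fun i => ?_) i
      · simpa using ratio_inv hyR
      · simpa using hx i
  · rw [Fin.prod_univ_succ, Fin.prod_univ_succ]
    simp only [Fin.cons_zero, Fin.cons_succ]
    rw [h1, mul_one, mul_inv_cancel₀ (ratio_ne h.1 hyR)]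

lemma kpf_mono {k k' : ℕ} (hk : Odd k) (hk' : Odd k') (h : k ≤ k') {G : SimpleGraph ℕ}
    (hG : KProductFree k' G) : KProductFree k G := by
  obtain ⟨t, rfl⟩ : ∃ t, k' = k + 2 * t := by
    obtain ⟨a, rfl⟩ := hk
    obtain ⟨b, rfl⟩ := hk'
    exact ⟨b - a, by omega⟩
  clear hk' h
  induction t with
  | zero => simpa using hG
  | succ t ih =>
    apply ih
    apply kpf_step (by have := hk.pos; omega)
    rwa [show k + 2 * (t + 1) = k + 2 * t + 2 by ring] at hG

theorem part2 (k k' : ℕ) (hk : Odd k) (hk' : Odd k') (h : k ≤ k') : betaK k' ≤ betaK k := by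
  refine csSup_le ⟨_, ⊥, kpf_bot k', rfl⟩ ?_
  rintro x ⟨G, hG, rfl⟩
  exact gProd_le_betaK (kpf_mono hk hk' h hG)

def lam (n : ℕ) : ℤ := (-1) ^ bigOmega n

lemma lam_mul {a b : ℕ} (ha : 0 < a) (hb : 0 < b) : lam (a * b) = lam a * lam b := by
  unfold lam bigOmega
  rw [(Nat.perm_primeFactorsList_mul ha.ne' hb.ne').length_eq, List.length_append, pow_add]

lemma lam_sq (a : ℕ) : lam a = 1 ∨ lam a = -1 := neg_one_pow_eq_or ℤ _

lemma lam_prod {ι : Type*} (s : Finset ι) (a : ι → ℕ) (ha : ∀ i, 0 < a i) :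
    lam (∏ i ∈ s, a i) = ∏ i ∈ s, lam (a i) := by
  induction s using Finset.induction_on with
  | empty => simp [lam, bigOmega]
  | insert i s hi ih =>
    rw [Finset.prod_insert hi, Finset.prod_insert hi, lam_mul (ha i) (Finset.prod_pos fun i _ => ha i), ih]

def liouG : SimpleGraph ℕ where
  Adj a b := 0 < a ∧ 0 < b ∧ lam a ≠ lam b
  symm := ⟨fun _ _ h => ⟨h.2.1, h.1, h.2.2.symm⟩⟩
  loopless := ⟨fun _ h => h.2.2 rfl⟩

lemma liouG_kpf {k : ℕ} (hk : Odd k) : KProductFree k liouG := by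
  rw [kpf_iff hk.pos]
  refine ⟨fun a b h => h.1, fun x hx h1 => ?_⟩
  choose a b hab hxab using hx
  have e : ∏ i, a i = ∏ i, b i := by
    simp only [hxab, Finset.prod_div_distrib] at h1
    have hb : (∏ i, (b i : ℚ)) ≠ 0 := Finset.prod_ne_zero_iff.2 fun i _ => by
      have := (hab i).2.1; positivity
    rw [div_eq_one_iff_eq hb] at h1
    exact_mod_cast h1
  have e2 := congrArg lam e
  rw [lam_prod _ _ fun i => (hab i).1, lam_prod _ _ fun i => (hab i).2.1] at e2
  have e3 : ∀ i, lam (a i) = - lam (b i) := fun i => by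
    have := (hab i).2.2
    rcases lam_sq (a i) with h | h <;> rcases lam_sq (b i) with h' | h' <;> simp_all
  simp only [e3, Finset.prod_neg] at e2
  simp only [Finset.card_univ, Fintype.card_fin, hk.neg_one_pow] at e2
  have : ∏ i, lam (b i) ≠ 0 := Finset.prod_ne_zero_iff.2 fun i _ => by
    rcases lam_sq (b i) with h | h <;> simp [h]
  omega

lemma liouG_eOn (m : ℕ) : (4 : ℤ) * eOn liouG m = (m : ℤ) ^ 2 - (L m) ^ 2 := by
  set I := Finset.Icc 1 m
  set S := (I ×ˢ I).filter (fun p => lam p.1 ≠ lam p.2) with hS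
  have h1 : (L m) ^ 2 = (m : ℤ) ^ 2 - 2 * S.card := by
    have : (L m) ^ 2 = ∑ p ∈ I ×ˢ I, lam p.1 * lam p.2 := by
      rw [sq, Finset.sum_product, L, Finset.sum_mul_sum]; rfl
    rw [this]
    have : ∀ p ∈ I ×ˢ I, lam p.1 * lam p.2 = 1 - 2 * (if lam p.1 ≠ lam p.2 then 1 else 0) := by
      intro p _
      rcases lam_sq p.1 with h | h <;> rcases lam_sq p.2 with h' | h' <;> simp [h, h']
    rw [Finset.sum_congr rfl this, Finset.sum_sub_distrib, ← Finset.mul_sum, Finset.sum_boole]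
    simp [hS, I, sq]
  have h2 : S.card = eOn liouG m + eOn liouG m := by
    have e1 : eOn liouG m = (S.filter (fun p => p.1 < p.2)).card := by
      unfold eOn
      congr 1
      ext p
      rw [Finset.mem_filter, Finset.mem_filter, Finset.mem_filter, Finset.mem_product, Finset.mem_Icc, Finset.mem_Icc]
      constructor
      · rintro ⟨h, h', -, -, h''⟩; exact ⟨⟨h, h''⟩, h'⟩
      · rintro ⟨⟨h, h''⟩, h'⟩; exact ⟨h, h', by omega, by omega, h''⟩
    have e2 : (S.filter (fun p => ¬ p.1 < p.2)).card = (S.filter (fun p => p.1 < p.2)).card := by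
      refine Finset.card_bij (fun p _ => p.swap) ?_ ?_ ?_
      · rintro ⟨a, b⟩ h
        simp only [hS, Finset.mem_filter, Finset.mem_product, Prod.swap] at h ⊢
        refine ⟨⟨⟨h.1.1.2, h.1.1.1⟩, h.1.2.symm⟩, ?_⟩
        have : a ≠ b := fun e => h.1.2 (by rw [e])
        omega
      · intro a _ b _ h; exact Prod.swap_injective h
      · rintro ⟨a, b⟩ h
        refine ⟨⟨b, a⟩, ?_, rfl⟩
        simp only [hS, Finset.mem_filter, Finset.mem_product] at h ⊢
        exact ⟨⟨⟨h.1.1.2, h.1.1.1⟩, h.1.2.symm⟩, by omega⟩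
    have := Finset.card_filter_add_card_filter_not (s := S) (fun p => p.1 < p.2)
    omega
  rw [h1, h2]; push_cast; ring

theorem part3 (k : ℕ) (hk : Odd k) : betaMinus ≤ betaK k := by
  refine le_of_eq_of_le ?_ (gProd_le_betaK (liouG_kpf hk))
  unfold betaMinus gProd
  congr 1
  ext m
  congr 1
  have := liouG_eOn (m + 1)
  have h : (4 : ℝ) * eOn liouG (m + 1) = ((m + 1 : ℕ) : ℝ) ^ 2 - (L (m + 1) : ℝ) ^ 2 := by exact_mod_cast this
  push_cast at h
  linarith

noncomputable def opt (G : SimpleGraph ℕ) (m : ℕ) : Finset (Finset ℕ) :=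
  (insert ∅ ((Finset.Icc 1 m).image (fun a => {a}))) ∪
  ((((Finset.Icc 1 m) ×ˢ (Finset.Icc 1 m)).filter
    (fun p => p.1 < p.2 ∧ G.Adj p.1 p.2)).image (fun p => {p.1, p.2}))

lemma opt_card_le (G : SimpleGraph ℕ) (m : ℕ) : (opt G m).card ≤ fG G m := by
  unfold opt fG
  refine (Finset.card_union_le _ _).trans ?_
  have h1 := Finset.card_insert_le ∅ ((Finset.Icc 1 m).image (fun a => ({a} : Finset ℕ)))
  have h2 : ((Finset.Icc 1 m).image (fun a => ({a} : Finset ℕ))).card ≤ m := by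
    simpa using Finset.card_image_le (s := Finset.Icc 1 m) (f := fun a => ({a} : Finset ℕ))
  have h3 := Finset.card_image_le (s := ((Finset.Icc 1 m) ×ˢ (Finset.Icc 1 m)).filter
    (fun p => p.1 < p.2 ∧ G.Adj p.1 p.2)) (f := fun p => ({p.1, p.2} : Finset ℕ))
  unfold eOn
  omega

lemma opt_card (G : SimpleGraph ℕ) (m : ℕ) : (opt G m).card = fG G m := by
  unfold opt fG
  rw [Finset.card_union_of_disjoint, Finset.card_insert_of_notMem,
    Finset.card_image_of_injective _ Finset.singleton_injective, Finset.card_image_of_injOn]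
  · unfold eOn; simp; omega
  · rintro ⟨a, b⟩ h ⟨c, d⟩ h' e
    simp only [Finset.coe_filter, mem_ofPred_eq] at h h' e
    have hac : a ∈ ({c, d} : Finset ℕ) := e ▸ (by simp)
    have hbc : b ∈ ({c, d} : Finset ℕ) := e ▸ (by simp)
    simp only [Finset.mem_insert, Finset.mem_singleton] at hac hbc
    have h1 := h.2.1
    have h2 := h'.2.1
    ext <;> simp <;> omega
  · simp
  · rw [Finset.disjoint_left]
    intro c hc hc'
    have h1 : c.card ≤ 1 := by
      simp only [Finset.mem_insert, Finset.mem_image] at hc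
      rcases hc with rfl | ⟨a, -, rfl⟩ <;> simp
    simp only [Finset.mem_image, Finset.mem_filter] at hc'
    obtain ⟨p, ⟨-, hp, -⟩, rfl⟩ := hc'
    rw [Finset.card_pair hp.ne] at h1
    omega

lemma opt_sub {G : SimpleGraph ℕ} {m : ℕ} {c : Finset ℕ} (h : c ∈ opt G m) : c ⊆ Finset.Icc 1 m := by
  simp only [opt, Finset.mem_union, Finset.mem_insert, Finset.mem_image, Finset.mem_filter, Finset.mem_product] at h
  rcases h with (rfl | ⟨a, ha, rfl⟩) | ⟨p, ⟨hp, -⟩, rfl⟩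
  · simp
  · simpa using ha
  · intro x hx
    simp only [Finset.mem_insert, Finset.mem_singleton] at hx
    rcases hx with rfl | rfl
    exacts [hp.1, hp.2]

lemma opt_adj {G : SimpleGraph ℕ} {m : ℕ} {c : Finset ℕ} (h : c ∈ opt G m) {a b : ℕ} (ha : a ∈ c)
    (hb : b ∈ c) (hab : a ≠ b) : G.Adj a b := by
  simp only [opt, Finset.mem_union, Finset.mem_insert, Finset.mem_image, Finset.mem_filter, Finset.mem_product] at h
  rcases h with (rfl | ⟨x, -, rfl⟩) | ⟨p, ⟨-, -, hp⟩, rfl⟩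
  · simp at ha
  · simp at ha hb; omega
  · simp only [Finset.mem_insert, Finset.mem_singleton] at ha hb
    rcases ha with rfl | rfl <;> rcases hb with rfl | rfl
    exacts [absurd rfl hab, hp, hp.symm, absurd rfl hab]

lemma mem_opt {G : SimpleGraph ℕ} {m : ℕ} {c : Finset ℕ} (h : c ⊆ Finset.Icc 1 m) (h2 : c.card ≤ 2)
    (h3 : ∀ a ∈ c, ∀ b ∈ c, a ≠ b → G.Adj a b) : c ∈ opt G m := by
  simp only [opt, Finset.mem_union, Finset.mem_insert, Finset.mem_image, Finset.mem_filter, Finset.mem_product]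
  interval_cases hc : c.card
  · left; left; simpa using hc
  · obtain ⟨a, rfl⟩ := Finset.card_eq_one.1 hc
    left; right; exact ⟨a, by simpa using h, rfl⟩
  · obtain ⟨a, b, hab, rfl⟩ := Finset.card_eq_two.1 hc
    right
    rcases lt_or_gt_of_ne hab with h' | h'
    · exact ⟨(a, b), ⟨⟨h (by simp), h (by simp)⟩, h', h3 _ (by simp) _ (by simp) hab⟩, rfl⟩
    · exact ⟨(b, a), ⟨⟨h (by simp), h (by simp)⟩, h', h3 _ (by simp) _ (by simp) hab.symm⟩, Finset.pair_comm _ _⟩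

lemma exists_perm_of_count {ι κ : Type*} [Fintype ι] (p q : ι → κ)
    (h : ∀ r, (Finset.univ.filter (fun i => p i = r)).card = (Finset.univ.filter (fun i => q i = r)).card) :
    ∃ σ : ι ≃ ι, ∀ i, q (σ i) = p i := by
  have e : ∀ r, Nonempty ({i // p i = r} ≃ {i // q i = r}) := fun r => by
    rw [← Fintype.card_eq, Fintype.card_subtype, Fintype.card_subtype, h]
  refine ⟨(Equiv.sigmaFiberEquiv p).symm.trans
    ((Equiv.sigmaCongrRight fun r => (e r).some).trans (Equiv.sigmaFiberEquiv q)), fun i => ?_⟩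
  exact ((e (p i)).some ⟨i, rfl⟩).2

/-- primes `p ≤ n` with `n / p < M` -/
noncomputable def bigP (n M : ℕ) : Finset ℕ :=
  (Finset.Icc 1 n).filter (fun p => p.Prime ∧ n / p < M)

lemma bigP_gt {n M p : ℕ} (hn : M ^ 2 ≤ n) (hp : p ∈ bigP n M) : M < p := by
  simp only [bigP, Finset.mem_filter, Finset.mem_Icc] at hp
  have h1 := hp.2.2
  rw [Nat.div_lt_iff_lt_mul hp.2.1.pos] at h1
  by_contra h
  push Not at h
  have := Nat.mul_le_mul_left M h
  nlinarith

noncomputable def asm {P : Finset ℕ} (c : P → Finset ℕ) : Finset ℕ :=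
  Finset.univ.biUnion (fun p => (c p).image (fun a => p.1 * a))

lemma mem_asm {P : Finset ℕ} {c : P → Finset ℕ} {x : ℕ} : x ∈ asm c ↔ ∃ p : P, ∃ a ∈ c p, p.1 * a = x := by
  simp [asm]

lemma sk_lower {k : ℕ} (hk : 1 ≤ k) {G : SimpleGraph ℕ} (hG : KProductFree k G) {M n : ℕ} (hn : M ^ 2 ≤ n) :
    ∏ p ∈ bigP n M, fG G (n / p) ≤ Sk k n := by
  set P := bigP n M with hP
  have hprime : ∀ p : P, p.1.Prime := fun p => by
    have := p.2; simp only [hP, bigP, Finset.mem_filter] at this; exact this.2.1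
  have key : ∀ (c : P → Finset ℕ), c ∈ Fintype.piFinset (fun p : P => opt G (n / p)) →
      ∀ (p q : P) (a : ℕ), a ∈ c p → 0 < a ∧ ¬ q.1 ∣ a := by
    intro c hc p q a ha
    have h1 := opt_sub (Fintype.mem_piFinset.1 hc p) ha
    rw [Finset.mem_Icc] at h1
    refine ⟨h1.1, fun h => ?_⟩
    have h2 := Nat.le_of_dvd h1.1 h
    have h3 := bigP_gt hn q.2
    have h4 : n / p.1 < M := by
      have := p.2; simp only [hP, bigP, Finset.mem_filter] at this; exact this.2.2
    omega
  have uniq : ∀ (p q : P) (a b : ℕ), ¬ p.1 ∣ b → p.1 * a = q.1 * b → p = q ∧ a = b := by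
    intro p q a b hb e
    have : p.1 ∣ q.1 * b := ⟨a, e.symm⟩
    have h1 := ((hprime p).dvd_mul.1 this).resolve_right hb
    have h2 : p = q := Subtype.ext ((Nat.prime_dvd_prime_iff_eq (hprime p) (hprime q)).1 h1)
    subst h2
    exact ⟨rfl, Nat.eq_of_mul_eq_mul_left (hprime p).pos e⟩
  have hcard : (Fintype.piFinset (fun p : P => opt G (n / p))).card = ∏ p ∈ P, fG G (n / p) := by
    rw [Fintype.card_piFinset]
    simp only [opt_card]
    exact Finset.prod_coe_sort P (fun p => fG G (n / p))
  rw [← hcard]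
  unfold Sk
  refine Finset.card_le_card_of_injOn asm ?_ ?_
  · intro c hc
    rw [Finset.mem_coe] at hc
    simp only [Finset.coe_filter, Finset.mem_powerset, mem_ofPred_eq]
    constructor
    · intro x hx
      obtain ⟨p, a, ha, rfl⟩ := mem_asm.1 hx
      have h1 := opt_sub (Fintype.mem_piFinset.1 hc p) ha
      rw [Finset.mem_Icc] at h1 ⊢
      have h2 := (hprime p).pos
      refine ⟨Nat.mul_pos h2 h1.1, ?_⟩
      calc p.1 * a ≤ p.1 * (n / p.1) := Nat.mul_le_mul_left _ h1.2
        _ ≤ n := Nat.mul_div_le _ _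
    · rintro ⟨a, b, ha, hb, hinj, hprod⟩
      simp only [mem_asm] at ha hb
      choose p α hα ha using ha
      choose q β hβ hb using hb
      have hcount : ∀ (r : P) (p : Fin k → P) (α : Fin k → ℕ) (hα : ∀ i, α i ∈ c (p i)),
          (∏ i, ((p i).1 * α i)).factorization r = (Finset.univ.filter (fun i => p i = r)).card := by
        intro r p α hα
        rw [Nat.factorization_prod_apply fun i _ => (Nat.mul_pos (hprime _).pos (key c hc _ r _ (hα i)).1).ne']
        rw [Finset.card_filter]
        refine Finset.sum_congr rfl fun i _ => ?_
        rw [Nat.factorization_mul (hprime _).ne_zero (key c hc _ r _ (hα i)).1.ne', Finsupp.add_apply,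
          Nat.factorization_eq_zero_of_not_dvd (key c hc _ r _ (hα i)).2, add_zero, (hprime _).factorization,
          Finsupp.single_apply]
        simp only [Subtype.ext_iff, eq_comm]
      obtain ⟨σ, hσ⟩ := exists_perm_of_count p q fun r => by
        have h1 := hcount r p α hα
        have h2 := hcount r q β hβ
        simp only [ha, hb] at h1 h2
        rw [hprod] at h1
        convert h1.symm.trans h2
      refine ((kpf_iff hk G).1 hG).2 (fun i => (α i : ℚ) / β (σ i)) (fun i => ⟨α i, β (σ i), ?_, rfl⟩) ?_
      · refine opt_adj (Fintype.mem_piFinset.1 hc (p i)) (hα i) (hσ i ▸ hβ (σ i)) fun e => ?_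
        have : a i = b (σ i) := by rw [← ha, ← hb, hσ, e]
        have h2 : (Sum.elim a b) (Sum.inl i) = (Sum.elim a b) (Sum.inr (σ i)) := this
        simpa using hinj h2
      · rw [Finset.prod_div_distrib, σ.prod_comp (fun i => (β i : ℚ))]
        have e1 : (∏ i, (p i).1) * ∏ i, α i = (∏ i, (p i).1) * ∏ i, β i := by
          have e2 : ∏ i, (p i).1 = ∏ i, (q i).1 := by
            rw [← σ.prod_comp (fun i => (q i).1)]; simp only [hσ]
          conv_rhs => rw [e2]
          rw [← Finset.prod_mul_distrib, ← Finset.prod_mul_distrib]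
          simp only [ha, hb, hprod]
        have e3 := Nat.eq_of_mul_eq_mul_left (Finset.prod_pos fun i _ => (hprime (p i)).pos) e1
        have h4 : (∏ i, (β i : ℚ)) ≠ 0 := Finset.prod_ne_zero_iff.2 fun i _ => by
          have := (key c hc _ (q i) _ (hβ i)).1
          positivity
        rw [div_eq_one_iff_eq h4]
        exact_mod_cast e3
  · intro c hc c' hc' e
    rw [Finset.mem_coe] at hc hc'
    have : ∀ c c' : P → Finset ℕ, c' ∈ Fintype.piFinset (fun p : P => opt G (n / p)) → asm c ⊆ asm c' → ∀ p, c p ⊆ c' p := by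
      intro c c' hc' h p a ha
      obtain ⟨q, b, hb, e⟩ := mem_asm.1 (h (mem_asm.2 ⟨p, a, ha, rfl⟩))
      obtain ⟨rfl, rfl⟩ := uniq p q a b (key c' hc' _ _ _ hb).2 e.symm
      exact hb
    funext p
    exact (this c c' hc' e.subset p).antisymm (this c' c hc e.symm.subset p)

/-- number of primes with `n / p = m` -/
noncomputable def wt (n m : ℕ) : ℕ := ((Finset.Icc 1 n).filter (fun p => p.Prime ∧ n / p = m)).card

lemma primeCounting_eq_card (n : ℕ) : Nat.primeCounting n = ((Finset.Icc 1 n).filter Nat.Prime).card := by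
  unfold Nat.primeCounting Nat.primeCounting'
  rw [Nat.count_eq_card_filter_range]
  congr 1
  ext p
  simp only [Finset.mem_filter, Finset.mem_range, Finset.mem_Icc]
  constructor
  · rintro ⟨h, h'⟩; exact ⟨⟨h'.one_lt.le, by omega⟩, h'⟩
  · rintro ⟨h, h'⟩; exact ⟨by omega, h'⟩

lemma wt_eq (n m : ℕ) (hm : 1 ≤ m) : wt n m + Nat.primeCounting (n / (m + 1)) = Nat.primeCounting (n / m) := by
  rw [primeCounting_eq_card, primeCounting_eq_card, wt, ← Finset.card_union_of_disjoint]
  · congr 1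
    ext p
    simp only [Finset.mem_union, Finset.mem_filter, Finset.mem_Icc]
    by_cases hp : p.Prime
    · have h0 := hp.pos
      have h1 : n / p = m ↔ m * p ≤ n ∧ n < (m + 1) * p := by
        rw [Nat.div_eq_iff h0]
        constructor
        · rintro ⟨h, h'⟩; refine ⟨h, ?_⟩; rw [add_mul]; omega
        · rintro ⟨h, h'⟩; refine ⟨h, ?_⟩; rw [add_mul] at h'; omega
      have h3 : p ≤ n / (m + 1) ↔ (m + 1) * p ≤ n := by
        rw [Nat.le_div_iff_mul_le (by omega), mul_comm]
      have h4 : p ≤ n / m ↔ m * p ≤ n := by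
        rw [Nat.le_div_iff_mul_le (by omega), mul_comm]
      rw [h1, h3, h4]
      have h5 : p ≤ m * p := Nat.le_mul_of_pos_left _ hm
      have h6 : m * p ≤ (m + 1) * p := Nat.mul_le_mul_right _ (by omega)
      simp only [hp, true_and, and_true]
      omega
    · simp [hp]
  · rw [Finset.disjoint_left]
    intro p hp hp'
    simp only [Finset.mem_filter, Finset.mem_Icc] at hp hp'
    have h0 := hp.2.1.pos
    have h1 := hp'.1.2
    rw [Nat.le_div_iff_mul_le (by omega), mul_comm, ← Nat.le_div_iff_mul_le h0] at h1
    omega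

lemma prod_bigP (n M : ℕ) (f : ℕ → ℕ) : ∏ p ∈ bigP n M, f (n / p) = ∏ m ∈ Finset.range M, f m ^ wt n m := by
  rw [← Finset.prod_fiberwise_of_maps_to (s := bigP n M) (t := Finset.range M) (g := fun p => n / p)]
  · refine Finset.prod_congr rfl fun m hm => ?_
    rw [Finset.prod_congr rfl (g := fun _ => f m) (fun p hp => by rw [(Finset.mem_filter.1 hp).2]), Finset.prod_const]
    congr 1
    unfold wt bigP
    congr 1
    ext p
    simp only [Finset.mem_filter, Finset.mem_range] at hm ⊢
    constructor
    · rintro ⟨⟨h, h', -⟩, h''⟩; exact ⟨h, h', h''⟩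
    · rintro ⟨h, h', h''⟩; exact ⟨⟨h, h', by omega⟩, h''⟩
  · intro p hp
    simp only [bigP, Finset.mem_filter] at hp
    simpa using hp.2.2

lemma exists_fin_emb {S : Finset ℕ} {k : ℕ} (h : k ≤ S.card) : ∃ u : Fin k → ℕ, Function.Injective u ∧ ∀ i, u i ∈ S := by
  obtain ⟨t, ht, hc⟩ := Finset.exists_subset_card_eq h
  exact ⟨fun i => (t.equivFinOfCardEq hc).symm i, fun i j e => by simpa using Subtype.ext e,
    fun i => ht ((t.equivFinOfCardEq hc).symm i).2⟩

lemma kst {k : ℕ} (hk : 2 ≤ k) {A : Finset ℕ} (hA : MulKSidon k A) (T : Finset (ℕ × ℕ)) (W B : Finset ℕ)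
    (hT : ∀ t ∈ T, t.1 * t.2 ∈ A) (hinj : Set.InjOn (fun t : ℕ × ℕ => t.1 * t.2) T) :
    (W.filter (fun w => k ≤ (B.filter (fun b => (w, b) ∈ T)).card)).card ≤ (k - 1) * B.card ^ k := by
  set H := W.filter (fun w => k ≤ (B.filter (fun b => (w, b) ∈ T)).card) with hH
  by_contra hcon
  push Not at hcon
  have h1 : ∀ w ∈ H, ∃ S, S ⊆ B.filter (fun b => (w, b) ∈ T) ∧ S.card = k := fun w hw =>
    Finset.exists_subset_card_eq (Finset.mem_filter.1 hw).2
  choose! S hS hSc using h1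
  have h2 : ∀ w ∈ H, S w ∈ B.powersetCard k := fun w hw => by
    rw [Finset.mem_powersetCard]
    exact ⟨(hS w hw).trans (Finset.filter_subset _ _), hSc w hw⟩
  have h3 : (B.powersetCard k).card * (k - 1) < H.card := by
    rw [Finset.card_powersetCard]
    calc B.card.choose k * (k - 1) ≤ B.card ^ k * (k - 1) := Nat.mul_le_mul_right _ (Nat.choose_le_pow _ _)
      _ < _ := by rw [mul_comm]; exact hcon
  obtain ⟨S0, hS0, h4⟩ := Finset.exists_lt_card_fiber_of_mul_lt_card_of_maps_to h2 h3
  obtain ⟨u, hu, hu'⟩ := exists_fin_emb (show k ≤ _ by exact Nat.le_of_pred_lt h4)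
  obtain ⟨v, hv, hv'⟩ := exists_fin_emb (Finset.mem_powersetCard.1 hS0).2.ge
  have hmem : ∀ i j, (u i, v j) ∈ T := fun i j => by
    have h5 := Finset.mem_filter.1 (hu' i)
    have h6 := hS (u i) h5.1
    rw [h5.2] at h6
    exact (Finset.mem_filter.1 (h6 (hv' j))).2
  obtain ⟨j, rfl⟩ : ∃ j, k = j + 2 := ⟨k - 2, by omega⟩
  apply hA
  refine ⟨fun i => u i * v i, fun i => u i * v (finRotate _ i), fun i => hT _ (hmem _ _), fun i => hT _ (hmem _ _), ?_, ?_⟩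
  · have aux : ∀ i i' l l', u i * v l = u i' * v l' → i = i' ∧ l = l' := by
      intro i i' l l' e
      have := hinj (hmem i l) (hmem i' l') e
      rw [Prod.mk.injEq] at this
      exact ⟨hu this.1, hv this.2⟩
    have rot : ∀ i : Fin (j + 2), finRotate _ i ≠ i := fun i => by
      rw [finRotate_apply]; simp
    rintro (i | i) (i' | i') e
    · simp only [Sum.elim_inl] at e; rw [(aux _ _ _ _ e).1]
    · simp only [Sum.elim_inl, Sum.elim_inr] at e
      obtain ⟨rfl, h⟩ := aux _ _ _ _ e
      exact absurd h.symm (rot i)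
    · simp only [Sum.elim_inl, Sum.elim_inr] at e
      obtain ⟨rfl, h⟩ := aux _ _ _ _ e
      exact absurd h (rot i)
    · simp only [Sum.elim_inr] at e; rw [(aux _ _ _ _ e).1]
  · rw [Finset.prod_mul_distrib, Finset.prod_mul_distrib, Equiv.prod_comp (finRotate (j + 2)) (fun i => v i)]

lemma kst_card {k : ℕ} (hk : 2 ≤ k) {A : Finset ℕ} (hA : MulKSidon k A) (T : Finset (ℕ × ℕ)) (W B : Finset ℕ)
    (hT : ∀ t ∈ T, t.1 ∈ W ∧ t.2 ∈ B ∧ t.1 * t.2 ∈ A) (hinj : Set.InjOn (fun t : ℕ × ℕ => t.1 * t.2) T) :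
    T.card ≤ (k - 1) * W.card + (k - 1) * B.card ^ (k + 1) := by
  have h1 := kst hk hA T W B (fun t ht => (hT t ht).2.2) hinj
  set d : ℕ → ℕ := fun w => (B.filter (fun b => (w, b) ∈ T)).card with hd
  have h2 : T.card ≤ ∑ w ∈ W, d w := by
    rw [Finset.card_eq_sum_card_fiberwise (f := Prod.fst) (t := W) (fun t ht => (hT t ht).1)]
    refine Finset.sum_le_sum fun w _ => ?_
    refine Finset.card_le_card_of_injOn Prod.snd ?_ ?_
    · rintro ⟨a, b⟩ h
      simp only [Finset.coe_filter, mem_ofPred_eq] at h ⊢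
      obtain ⟨h, rfl⟩ := h
      exact ⟨(hT _ h).2.1, h⟩
    · rintro ⟨a, b⟩ h ⟨a', b'⟩ h' e
      simp only [Finset.coe_filter, mem_ofPred_eq] at h h' e
      rw [e, h.2, h'.2]
  refine h2.trans ?_
  have h3 : ∀ w ∈ W, d w ≤ (k - 1) + (if k ≤ d w then B.card else 0) := by
    intro w _
    split_ifs with h
    · exact (Finset.card_filter_le _ _).trans (Nat.le_add_left _ _)
    · omega
  refine (Finset.sum_le_sum h3).trans ?_
  rw [Finset.sum_add_distrib, Finset.sum_const, ← Finset.sum_filter, Finset.sum_const, smul_eq_mul, smul_eq_mul, mul_comm W.card, pow_succ, ← mul_assoc]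
  gcongr

/-- elements of `A` all of whose prime factors `p` satisfy `p * y ≤ n` -/
noncomputable def smallA (A : Finset ℕ) (n y : ℕ) : Finset ℕ :=
  A.filter (fun x => ∀ p, p.Prime → p ∣ x → p * y ≤ n)

noncomputable def uu (n y x : ℕ) : ℕ := Nat.findGreatest (fun u => u ∣ x ∧ u * y ≤ n) x

lemma uu_spec {n y x : ℕ} (hx : 0 < x) (hy : y ≤ n) (hxy : n < x * y) (hx' : ∀ p, p.Prime → p ∣ x → p * y ≤ n) :
    uu n y x ∣ x ∧ uu n y x * y ≤ n ∧ n < (uu n y x) ^ 2 * y := by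
  have h1 : uu n y x ∣ x ∧ uu n y x * y ≤ n :=
    Nat.findGreatest_spec (P := fun u => u ∣ x ∧ u * y ≤ n) (m := 1) hx ⟨one_dvd _, by simpa⟩
  refine ⟨h1.1, h1.2, ?_⟩
  have hmax : ∀ v, v ∣ x → v * y ≤ n → v ≤ uu n y x := fun v hv hv' =>
    Nat.le_findGreatest (Nat.le_of_dvd hx hv) ⟨hv, hv'⟩
  set u := uu n y x
  have hne : x / u ≠ 1 := fun e => by
    have := Nat.div_mul_cancel h1.1
    rw [e, one_mul] at this
    rw [this] at h1; omega
  obtain ⟨q, hq, hqd⟩ := Nat.exists_prime_and_dvd hne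
  have hqx : u * q ∣ x := by
    exact Nat.mul_dvd_of_dvd_div h1.1 hqd
  have h2 : q ≤ u := hmax q ((dvd_mul_left _ _).trans hqx) (hx' q hq ((dvd_mul_left _ _).trans hqx))
  have h3 : n < u * q * y := by
    by_contra h
    push Not at h
    have := hmax _ hqx h
    have hu : 0 < u := Nat.pos_of_dvd_of_pos h1.1 hx
    have := hq.two_le
    nlinarith
  calc n < u * q * y := h3
    _ ≤ u ^ 2 * y := by rw [sq]; gcongr

lemma small_count {k : ℕ} (hk : 2 ≤ k) {A : Finset ℕ} (hA : MulKSidon k A) {n s y : ℕ} (hAn : A ⊆ Finset.Icc 1 n)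
    (hs : 1 ≤ s) (hy : 1 ≤ y) (hn : s ^ 2 * y ≤ n) :
    (smallA A n y).card ≤ n / y + ∑ j ∈ Finset.Icc 1 (n / (s * y)), ((k - 1) * (n / (j * s)) + (k - 1) * s ^ (k + 1)) := by
  have hyn : y ≤ n := le_trans (Nat.le_mul_of_pos_left _ (by positivity)) hn
  rw [← Finset.card_filter_add_card_filter_not (s := smallA A n y) (fun x => x * y ≤ n)]
  apply add_le_add
  · refine (Finset.card_le_card (t := Finset.Icc 1 (n / y)) ?_).trans (by simp)
    intro x hx
    simp only [smallA, Finset.mem_filter] at hx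
    have := Finset.mem_Icc.1 (hAn hx.1.1)
    rw [Finset.mem_Icc, Nat.le_div_iff_mul_le (by omega)]
    exact ⟨this.1, hx.2⟩
  · set X := (smallA A n y).filter (fun x => ¬ x * y ≤ n) with hX
    have hXs : ∀ x ∈ X, x ∈ A ∧ 1 ≤ x ∧ x ≤ n ∧ uu n y x ∣ x ∧ uu n y x * y ≤ n ∧ n < (uu n y x) ^ 2 * y := by
      intro x hx
      simp only [hX, smallA, Finset.mem_filter] at hx
      have := Finset.mem_Icc.1 (hAn hx.1.1)
      exact ⟨hx.1.1, this.1, this.2, uu_spec this.1 hyn (by omega) hx.1.2⟩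
    rw [Finset.card_eq_sum_card_fiberwise (f := fun x => uu n y x / s) (t := Finset.Icc 1 (n / (s * y)))]
    · refine Finset.sum_le_sum fun j hj => ?_
      rw [Finset.mem_Icc] at hj
      set Xj := X.filter (fun x => uu n y x / s = j)
      have hXj : ∀ x ∈ Xj, x ∈ X ∧ uu n y x / s = j := fun x hx => Finset.mem_filter.1 hx
      have hcan : ∀ x ∈ X, x / uu n y x * uu n y x = x := fun x hx => Nat.div_mul_cancel (hXs x hx).2.2.2.1
      set g : ℕ → ℕ × ℕ := fun x => (x / uu n y x, uu n y x) with hg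
      have hginj : Set.InjOn g Xj := by
        intro x hx x' hx' e
        rw [Finset.mem_coe] at hx hx'
        rw [← hcan x (hXj x hx).1, ← hcan x' (hXj x' hx').1]
        simp only [hg, Prod.mk.injEq] at e
        rw [e.1, e.2]
      rw [← Finset.card_image_of_injOn hginj]
      have := kst_card hk hA (Xj.image g) (Finset.Icc 1 (n / (j * s))) (Finset.Ico (j * s) (j * s + s)) ?_ ?_
      · simpa using this
      · intro t ht
        obtain ⟨x, hx, rfl⟩ := Finset.mem_image.1 ht
        obtain ⟨hxX, hxj⟩ := hXj x hx
        have h := hXs x hxX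
        have hu : 0 < uu n y x := Nat.pos_of_dvd_of_pos h.2.2.2.1 h.2.1
        have e1 := Nat.div_add_mod (uu n y x) s
        have e2 := Nat.mod_lt (uu n y x) hs
        rw [hxj, mul_comm] at e1
        simp only [hg, Finset.mem_Icc, Finset.mem_Ico]
        refine ⟨⟨Nat.div_pos (Nat.le_of_dvd h.2.1 h.2.2.2.1) hu, ?_⟩, ⟨by omega, by omega⟩, ?_⟩
        · calc x / uu n y x ≤ n / uu n y x := Nat.div_le_div_right h.2.2.1
            _ ≤ n / (j * s) := Nat.div_le_div_left (by omega) (by have := hj.1; positivity)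
        · rw [hcan x hxX]; exact h.1
      · intro t ht t' ht' e
        obtain ⟨x, hx, rfl⟩ := Finset.mem_image.1 ht
        obtain ⟨x', hx', rfl⟩ := Finset.mem_image.1 ht'
        simp only [hg] at e
        rw [hcan x (hXj x hx).1, hcan x' (hXj x' hx').1] at e
        rw [e]
    · intro x hx
      have h := hXs x hx
      simp only [Finset.coe_Icc, Set.mem_Icc]
      constructor
      · apply Nat.div_pos _ hs
        by_contra hc
        push Not at hc
        have : uu n y x ^ 2 * y ≤ s ^ 2 * y := by gcongr
        omega
      · rw [← Nat.div_div_eq_div_mul, Nat.div_div_eq_div_mul, mul_comm, ← Nat.div_div_eq_div_mul]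
        exact Nat.div_le_div_right ((Nat.le_div_iff_mul_le (by omega)).2 h.2.2.2.2.1)

lemma few_subsets (n E : ℕ) : ((Finset.Icc 1 n).powerset.filter (fun X => X.card ≤ E)).card ≤ (n + 1) ^ E := by
  have h : (Finset.univ : Finset (Fin E → Fin (n + 1))).card = (n + 1) ^ E := by simp
  rw [← h]
  refine Finset.card_le_card_of_surjOn
    (fun f => (Finset.univ.image (fun i => (f i : ℕ))).erase 0) ?_
  intro X hX
  simp only [Finset.coe_filter, Finset.mem_powerset, mem_ofPred_eq] at hX
  obtain ⟨hX, hc⟩ := hX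
  set e := X.equivFin
  refine ⟨fun i => if h : i.1 < X.card then ⟨e.symm ⟨i.1, h⟩, ?_⟩ else 0, by simp, ?_⟩
  · have := Finset.mem_Icc.1 (hX (e.symm ⟨i.1, h⟩).2); omega
  · ext x
    simp only [Finset.mem_erase, Finset.mem_image, Finset.mem_univ, true_and]
    constructor
    · rintro ⟨h0, i, hi⟩
      split_ifs at hi with h
      · rw [← hi]; exact (e.symm ⟨i.1, h⟩).2
      · simp at hi; omega
    · intro hx
      refine ⟨by have := Finset.mem_Icc.1 (hX hx); omega, ⟨(e ⟨x, hx⟩).1, by have := (e ⟨x, hx⟩).2; omega⟩, ?_⟩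
      simp

noncomputable def fib (A : Finset ℕ) (n p : ℕ) : Finset ℕ := (Finset.Icc 1 (n / p)).filter (fun a => p * a ∈ A)

noncomputable def gA (k : ℕ) (A : Finset ℕ) (n M : ℕ) : SimpleGraph ℕ where
  Adj a b := a ≠ b ∧ k ≤ ((bigP n M).filter (fun p => p * a ∈ A ∧ p * b ∈ A)).card
  symm := ⟨fun a b h => ⟨h.1.symm, by simpa only [and_comm] using h.2⟩⟩
  loopless := ⟨fun _ h => h.1 rfl⟩

lemma bigP_prime {n M p : ℕ} (h : p ∈ bigP n M) : p.Prime := (Finset.mem_filter.1 h).2.1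
lemma bigP_div {n M p : ℕ} (h : p ∈ bigP n M) : n / p < M := (Finset.mem_filter.1 h).2.2

lemma bigP_elt {A : Finset ℕ} {n M p a : ℕ} (hAn : A ⊆ Finset.Icc 1 n) (hp : p ∈ bigP n M) (h : p * a ∈ A) :
    0 < a ∧ a ≤ n / p ∧ a < M := by
  have h1 := Finset.mem_Icc.1 (hAn h)
  have h2 : a ≤ n / p := by
    rw [Nat.le_div_iff_mul_le (bigP_prime hp).pos, mul_comm]; exact h1.2
  refine ⟨Nat.pos_of_ne_zero fun e => by simp [e] at h1, h2, h2.trans_lt (bigP_div hp)⟩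

lemma bigP_uniq {n M p q a b : ℕ} (hn : M ^ 2 ≤ n) (hp : p ∈ bigP n M) (hq : q ∈ bigP n M) (hb : 0 < b) (hbM : b < M)
    (e : p * a = q * b) : p = q ∧ a = b := by
  have hnd : ¬ p ∣ b := fun h => by
    have := Nat.le_of_dvd hb h
    have := bigP_gt hn hp
    omega
  have h1 := ((bigP_prime hp).dvd_mul.1 (⟨a, e.symm⟩ : p ∣ q * b)).resolve_right hnd
  have h2 := (Nat.prime_dvd_prime_iff_eq (bigP_prime hp) (bigP_prime hq)).1 h1
  subst h2
  exact ⟨rfl, Nat.eq_of_mul_eq_mul_left (bigP_prime hp).pos e⟩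

lemma gA_elt {k : ℕ} (hk : 1 ≤ k) {A : Finset ℕ} {n M a b : ℕ} (hAn : A ⊆ Finset.Icc 1 n) (h : (gA k A n M).Adj a b) :
    0 < a ∧ a < M := by
  have h1 := h.2
  obtain ⟨p, hp⟩ := Finset.card_pos.1 (show 0 < _ by exact lt_of_lt_of_le hk h1)
  simp only [Finset.mem_filter] at hp
  have := bigP_elt hAn hp.1 hp.2.1
  exact ⟨this.1, this.2.2⟩

lemma gA_kpf {k : ℕ} (hk : 1 ≤ k) {A : Finset ℕ} (hA : MulKSidon k A) {n M : ℕ} (hAn : A ⊆ Finset.Icc 1 n)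
    (hn : M ^ 2 ≤ n) : KProductFree k (gA k A n M) := by
  rw [kpf_iff hk]
  refine ⟨fun a b h => (gA_elt hk hAn h).1, fun x hx h1 => ?_⟩
  choose a b hab hxab using hx
  set S : Fin k → Finset ℕ := fun i => (bigP n M).filter (fun p => p * a i ∈ A ∧ p * b i ∈ A)
  have hS : ∀ i, k ≤ (S i).card := fun i => (hab i).2
  have hall : ∀ s : Finset (Fin k), s.card ≤ (s.biUnion S).card := by
    intro s
    rcases s.eq_empty_or_nonempty with rfl | ⟨i, hi⟩
    · simp
    · calc s.card ≤ k := by simpa using Finset.card_le_univ s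
        _ ≤ (S i).card := hS i
        _ ≤ _ := Finset.card_le_card (Finset.subset_biUnion_of_mem S hi)
  obtain ⟨p, hpinj, hp⟩ := (Finset.all_card_le_biUnion_card_iff_exists_injective S).1 hall
  have hp' : ∀ i, p i ∈ bigP n M ∧ p i * a i ∈ A ∧ p i * b i ∈ A := fun i => by
    have := hp i; simpa only [S, Finset.mem_filter] using this
  have hla : ∀ i, 0 < a i ∧ a i < M := fun i => gA_elt hk hAn (hab i)
  have hlb : ∀ i, 0 < b i ∧ b i < M := fun i => gA_elt hk hAn (hab i).symm
  have e : ∏ i, a i = ∏ i, b i := by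
    simp only [hxab, Finset.prod_div_distrib] at h1
    have hb : (∏ i, (b i : ℚ)) ≠ 0 := Finset.prod_ne_zero_iff.2 fun i _ => by
      have := (hlb i).1; positivity
    rw [div_eq_one_iff_eq hb] at h1
    exact_mod_cast h1
  apply hA
  refine ⟨fun i => p i * a i, fun i => p i * b i, fun i => (hp' i).2.1, fun i => (hp' i).2.2, ?_, ?_⟩
  · rintro (i | i) (j | j) h
    · simp only [Sum.elim_inl] at h
      rw [hpinj (bigP_uniq hn (hp' i).1 (hp' j).1 (hla j).1 (hla j).2 h).1]
    · simp only [Sum.elim_inl, Sum.elim_inr] at h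
      have h2 := (bigP_uniq hn (hp' i).1 (hp' j).1 (hlb j).1 (hlb j).2 h)
      have h3 := hpinj h2.1
      subst h3
      exact absurd h2.2 (hab i).1
    · simp only [Sum.elim_inl, Sum.elim_inr] at h
      have h2 := (bigP_uniq hn (hp' i).1 (hp' j).1 (hla j).1 (hla j).2 h)
      have h3 := hpinj h2.1
      subst h3
      exact absurd h2.2.symm (hab i).1
    · simp only [Sum.elim_inr] at h
      rw [hpinj (bigP_uniq hn (hp' i).1 (hp' j).1 (hlb j).1 (hlb j).2 h).1]
  · rw [Finset.prod_mul_distrib, Finset.prod_mul_distrib, e]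

lemma kpf3_clique {G : SimpleGraph ℕ} (hG : KProductFree 3 G) {c : Finset ℕ}
    (h3 : ∀ a ∈ c, ∀ b ∈ c, a ≠ b → G.Adj a b) : c.card ≤ 2 := by
  by_contra hc
  push Not at hc
  obtain ⟨a, ha, b, hb, d, hd, hab, had, hbd⟩ := Finset.two_lt_card.1 hc
  rw [kpf_iff (by norm_num)] at hG
  have h1 := h3 a ha b hb hab
  have h2 := h3 b hb d hd hbd
  have h4 := h3 d hd a ha had.symm
  refine hG.2 ![(a : ℚ) / b, (b : ℚ) / d, (d : ℚ) / a] ?_ ?_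
  · intro i
    fin_cases i
    · exact ⟨a, b, h1, rfl⟩
    · exact ⟨b, d, h2, rfl⟩
    · exact ⟨d, a, h4, rfl⟩
  · have := hG.1 _ _ h1
    have := hG.1 _ _ h2
    have := hG.1 _ _ h4
    simp [Fin.prod_univ_three]
    field_simp

lemma fib_sub (A : Finset ℕ) (n p : ℕ) : fib A n p ⊆ Finset.Icc 1 (n / p) := Finset.filter_subset _ _

lemma bad1_count {k : ℕ} (hk : Odd k) (hk3 : 3 ≤ k) {A : Finset ℕ} (hA : MulKSidon k A) {n M : ℕ} (hAn : A ⊆ Finset.Icc 1 n)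
    (hn : M ^ 2 ≤ n) :
    ((bigP n M).filter (fun p => fib A n p ∉ opt (gA k A n M) (n / p))).card ≤ k * M ^ 2 := by
  have hkpf := gA_kpf (by omega) hA hAn hn
  have hkpf3 := kpf_mono (by decide) hk hk3 hkpf
  set S := (bigP n M).filter (fun p => fib A n p ∉ opt (gA k A n M) (n / p)) with hS
  have h1 : ∀ p ∈ S, ∃ t : ℕ × ℕ, p * t.1 ∈ A ∧ p * t.2 ∈ A ∧ t.1 ≠ t.2 ∧ ¬ (gA k A n M).Adj t.1 t.2 := by
    intro p hp
    by_contra hcon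
    push Not at hcon
    have hadj : ∀ a ∈ fib A n p, ∀ b ∈ fib A n p, a ≠ b → (gA k A n M).Adj a b := fun a ha b hb hab =>
      hcon (a, b) (Finset.mem_filter.1 ha).2 (Finset.mem_filter.1 hb).2 hab
    exact (Finset.mem_filter.1 hp).2 (mem_opt (fib_sub _ _ _) (kpf3_clique hkpf3 hadj) hadj)
  choose! t ht using h1
  have h2 : ∀ p ∈ S, t p ∈ Finset.range M ×ˢ Finset.range M := by
    intro p hp
    have hpb := (Finset.mem_filter.1 hp).1
    simp only [Finset.mem_product, Finset.mem_range]
    exact ⟨(bigP_elt hAn hpb (ht p hp).1).2.2, (bigP_elt hAn hpb (ht p hp).2.1).2.2⟩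
  refine (Finset.card_le_mul_card_image_of_maps_to h2 k ?_).trans (by simp [sq])
  intro b _
  rcases (S.filter (fun a => t a = b)).eq_empty_or_nonempty with h | ⟨p, hp⟩
  · rw [h]; simp
  · rw [Finset.mem_filter] at hp
    have h3 := (ht p hp.1).2.2
    have h4 : ¬ k ≤ ((bigP n M).filter (fun q => q * (t p).1 ∈ A ∧ q * (t p).2 ∈ A)).card := fun h => h3.2 ⟨h3.1, h⟩
    push Not at h4
    refine le_trans (Finset.card_le_card ?_) h4.le
    intro q hq
    rw [Finset.mem_filter] at hq
    rw [Finset.mem_filter, hp.2, ← hq.2]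
    exact ⟨(Finset.mem_filter.1 hq.1).1, (ht q hq.1).1, (ht q hq.1).2.1⟩

lemma bad2_count {k : ℕ} (hk : 2 ≤ k) {A : Finset ℕ} (hA : MulKSidon k A) {n y : ℕ} (hAn : A ⊆ Finset.Icc 1 n)
    (hn : y ^ 2 ≤ n) :
    ((bigP n y).filter (fun p => k ≤ (fib A n p).card)).card ≤ (k - 1) * y ^ k := by
  set T := ((bigP n y) ×ˢ (Finset.Icc 1 y)).filter (fun t => t.1 * t.2 ∈ A) with hT
  have := kst hk hA T (bigP n y) (Finset.Icc 1 y) (fun t ht => (Finset.mem_filter.1 ht).2) ?_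
  · simp only [Nat.card_Icc, Nat.add_sub_cancel] at this
    refine le_trans (Finset.card_le_card ?_) this
    intro p hp
    rw [Finset.mem_filter] at hp ⊢
    refine ⟨hp.1, hp.2.trans (Finset.card_le_card ?_)⟩
    intro a ha
    have h1 := (Finset.mem_filter.1 ha)
    have h2 := Finset.mem_Icc.1 h1.1
    have h3 := bigP_div hp.1
    simp only [hT, Finset.mem_filter, Finset.mem_product, Finset.mem_Icc]
    exact ⟨⟨h2.1, by omega⟩, ⟨hp.1, h2.1, by omega⟩, h1.2⟩
  · rintro ⟨p, a⟩ ht ⟨q, b⟩ ht' e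
    simp only [hT, Finset.coe_filter, mem_ofPred_eq, Finset.mem_product] at ht ht' e
    have h := bigP_elt hAn ht'.1.1 ht'.2
    obtain ⟨rfl, rfl⟩ := bigP_uniq hn ht.1.1 ht'.1.1 h.1 h.2.2 e
    rfl

def gr (D : Finset (ℕ × ℕ)) : SimpleGraph ℕ := SimpleGraph.fromRel (fun a b => (a, b) ∈ D)

noncomputable def DD (k M : ℕ) : Finset (Finset (ℕ × ℕ)) :=
  (Finset.range M ×ˢ Finset.range M).powerset.filter (fun D => KProductFree k (gr D))

noncomputable def OO (k : ℕ) (G : SimpleGraph ℕ) (M m : ℕ) : Finset (Finset ℕ) :=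
  if m < M then opt G m else (Finset.Icc 1 m).powerset.filter (fun X => X.card ≤ k - 1)

lemma OO_card (k : ℕ) (G : SimpleGraph ℕ) (M m : ℕ) :
    (OO k G M m).card ≤ if m < M then fG G m else (m + 1) ^ (k - 1) := by
  unfold OO
  split_ifs with h
  · exact (opt_card G m).le
  · exact few_subsets _ _

lemma OO_empty (k : ℕ) (G : SimpleGraph ℕ) (M m : ℕ) : ∅ ∈ OO k G M m := by
  unfold OO
  split_ifs with h
  · simp [opt]
  · simp

lemma gA_mem {k : ℕ} (hk : 1 ≤ k) {A : Finset ℕ} (hA : MulKSidon k A) {n M : ℕ} (hAn : A ⊆ Finset.Icc 1 n)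
    (hn : M ^ 2 ≤ n) : ∃ D ∈ DD k M, gr D = gA k A n M := by
  set D := (Finset.range M ×ˢ Finset.range M).filter (fun t => (gA k A n M).Adj t.1 t.2) with hD
  have e : gr D = gA k A n M := by
    ext a b
    simp only [gr, SimpleGraph.fromRel_adj, hD, Finset.mem_filter, Finset.mem_product, Finset.mem_range]
    constructor
    · rintro ⟨-, h | h⟩
      exacts [h.2, h.2.symm]
    · intro h
      exact ⟨h.1, Or.inl ⟨⟨(gA_elt hk hAn h).2, (gA_elt hk hAn h.symm).2⟩, h⟩⟩
  refine ⟨D, ?_, e⟩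
  simp only [DD, Finset.mem_filter, Finset.mem_powerset]
  exact ⟨Finset.filter_subset _ _, e ▸ gA_kpf hk hA hAn hn⟩

lemma structure_thm {k : ℕ} (hk : Odd k) (hk3 : 3 ≤ k) {A : Finset ℕ} (hA : MulKSidon k A) {n M s y E : ℕ} (hAn : A ⊆ Finset.Icc 1 n)
    (hs : 1 ≤ s) (hy : 1 ≤ y) (hM : M ≤ y) (hn : s ^ 2 * y ≤ n) (hn2 : y ^ 2 ≤ n)
    (hE : n / y + ∑ j ∈ Finset.Icc 1 (n / (s * y)), ((k - 1) * (n / (j * s)) + (k - 1) * s ^ (k + 1))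
      + (k * M ^ 2 + (k - 1) * y ^ k) * y ≤ E) :
    ∃ D ∈ DD k M, ∃ X ∈ (Finset.Icc 1 n).powerset.filter (fun X => X.card ≤ E),
      ∃ c ∈ Fintype.piFinset (fun p : bigP n y => OO k (gr D) M (n / p)), A = X ∪ asm c := by
  have hMn : M ^ 2 ≤ n := le_trans (by gcongr) hn2
  obtain ⟨D, hD, hgr⟩ := gA_mem (by omega) hA hAn hMn
  refine ⟨D, hD, ?_⟩
  set c : bigP n y → Finset ℕ := fun p => if fib A n p ∈ OO k (gr D) M (n / p) then fib A n p else ∅ with hc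
  have hcA : asm c ⊆ A := by
    intro x hx
    obtain ⟨p, a, ha, rfl⟩ := mem_asm.1 hx
    simp only [hc] at ha
    split_ifs at ha
    · exact (Finset.mem_filter.1 ha).2
    · simp at ha
  refine ⟨A \ asm c, ?_, c, ?_, (Finset.sdiff_union_of_subset hcA).symm⟩
  · rw [Finset.mem_filter, Finset.mem_powerset]
    refine ⟨Finset.sdiff_subset.trans hAn, le_trans ?_ hE⟩
    set bad := ((bigP n M).filter (fun p => fib A n p ∉ opt (gA k A n M) (n / p))) ∪
      ((bigP n y).filter (fun p => k ≤ (fib A n p).card)) with hbad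
    have hsub : A \ asm c ⊆ smallA A n y ∪ (bad.filter (fun p => p ∈ bigP n y)).biUnion (fun p => (fib A n p).image (fun a => p * a)) := by
      intro x hx
      rw [Finset.mem_sdiff] at hx
      obtain ⟨hxA, hx⟩ := hx
      rw [Finset.mem_union]
      by_cases hxs : ∀ p, p.Prime → p ∣ x → p * y ≤ n
      · left; exact Finset.mem_filter.2 ⟨hxA, hxs⟩
      right
      push Not at hxs
      obtain ⟨p, hp, ⟨a, rfl⟩, hpy⟩ := hxs
      have hxn := Finset.mem_Icc.1 (hAn hxA)
      have ha0 : 0 < a := Nat.pos_of_ne_zero fun e => by simp [e] at hxn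
      have hpP : p ∈ bigP n y := by
        simp only [bigP, Finset.mem_filter, Finset.mem_Icc]
        refine ⟨⟨hp.pos, le_trans (Nat.le_mul_of_pos_right _ ha0) hxn.2⟩, hp, ?_⟩
        rw [Nat.div_lt_iff_lt_mul hp.pos, mul_comm]; exact hpy
      have haf : a ∈ fib A n p := by
        simp only [fib, Finset.mem_filter, Finset.mem_Icc]
        exact ⟨⟨ha0, (bigP_elt hAn hpP hxA).2.1⟩, hxA⟩
      rw [Finset.mem_biUnion]
      refine ⟨p, ?_, Finset.mem_image_of_mem _ haf⟩
      rw [Finset.mem_filter]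
      refine ⟨?_, hpP⟩
      have hno : fib A n p ∉ OO k (gr D) M (n / p) := by
        intro h
        apply hx
        rw [mem_asm]
        refine ⟨⟨p, hpP⟩, a, ?_, rfl⟩
        simp only [hc, if_pos h]; exact haf
      rw [hgr] at hno
      unfold OO at hno
      rw [hbad, Finset.mem_union, Finset.mem_filter, Finset.mem_filter]
      split_ifs at hno with h
      · left
        refine ⟨?_, hno⟩
        simp only [bigP, Finset.mem_filter] at hpP ⊢
        exact ⟨hpP.1, hp, h⟩
      · right
        refine ⟨hpP, ?_⟩
        by_contra h'
        apply hno
        rw [Finset.mem_filter, Finset.mem_powerset]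
        exact ⟨fib_sub _ _ _, by omega⟩
    refine (Finset.card_le_card hsub).trans ((Finset.card_union_le _ _).trans ?_)
    refine add_le_add (small_count (by omega) hA hAn hs hy hn) ?_
    refine (Finset.card_biUnion_le_card_mul _ _ y ?_).trans ?_
    · intro p hp
      have h1 := bigP_div (Finset.mem_filter.1 hp).2
      refine Finset.card_image_le.trans ((Finset.card_le_card (fib_sub A n p)).trans ?_)
      simp; omega
    · refine Nat.mul_le_mul_right _ ((Finset.card_filter_le _ _).trans ((Finset.card_union_le _ _).trans ?_))
      exact add_le_add (bad1_count hk hk3 hA hAn hMn) (bad2_count (by omega) hA hAn hn2)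
  · rw [Fintype.mem_piFinset]
    intro p
    simp only [hc]
    split_ifs with h
    · exact h
    · exact OO_empty _ _ _ _

lemma sk_upper {k : ℕ} (hk : Odd k) (hk3 : 3 ≤ k) {n M s y E : ℕ}
    (hs : 1 ≤ s) (hy : 1 ≤ y) (hM : M ≤ y) (hn : s ^ 2 * y ≤ n) (hn2 : y ^ 2 ≤ n)
    (hE : n / y + ∑ j ∈ Finset.Icc 1 (n / (s * y)), ((k - 1) * (n / (j * s)) + (k - 1) * s ^ (k + 1))
      + (k * M ^ 2 + (k - 1) * y ^ k) * y ≤ E) :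
    Sk k n ≤ ∑ D ∈ DD k M, (n + 1) ^ E * ((∏ m ∈ Finset.range M, fG (gr D) m ^ wt n m) *
      ∏ p ∈ (bigP n y).filter (fun p => ¬ n / p < M), (n / p + 1) ^ (k - 1)) := by
  have hsub : (Finset.Icc 1 n).powerset.filter (fun A => MulKSidon k A) ⊆
      (DD k M).biUnion (fun D => (((Finset.Icc 1 n).powerset.filter (fun X => X.card ≤ E)) ×ˢ
        (Fintype.piFinset (fun p : bigP n y => OO k (gr D) M (n / p)))).image (fun t => t.1 ∪ asm t.2)) := by
    intro A hA
    rw [Finset.mem_filter, Finset.mem_powerset] at hA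
    obtain ⟨D, hD, X, hX, c, hc, e⟩ := structure_thm hk hk3 hA.2 hA.1 hs hy hM hn hn2 hE
    rw [Finset.mem_biUnion]
    refine ⟨D, hD, ?_⟩
    rw [Finset.mem_image]
    exact ⟨(X, c), Finset.mem_product.2 ⟨hX, hc⟩, e.symm⟩
  unfold Sk
  refine (Finset.card_le_card hsub).trans (Finset.card_biUnion_le.trans (Finset.sum_le_sum fun D _ => ?_))
  refine Finset.card_image_le.trans ?_
  rw [Finset.card_product, Fintype.card_piFinset, Finset.prod_coe_sort (bigP n y) (fun p => (OO k (gr D) M (n / p)).card)]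
  refine Nat.mul_le_mul (few_subsets _ _) ?_
  refine (Finset.prod_le_prod' fun p _ => OO_card k (gr D) M (n / p)).trans ?_
  rw [Finset.prod_ite]
  refine le_of_eq ?_
  congr 1
  rw [← prod_bigP]
  refine Finset.prod_congr ?_ fun _ _ => rfl
  ext p
  simp only [bigP, Finset.mem_filter]
  constructor
  · rintro ⟨⟨h, h', -⟩, h''⟩; exact ⟨h, h', h''⟩
  · rintro ⟨h, h', h''⟩; exact ⟨⟨h, h', by omega⟩, h''⟩

lemma fG_zero (G : SimpleGraph ℕ) : fG G 0 = 1 := by simp [fG, eOn]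

lemma pi_pos_ev : ∀ᶠ n : ℕ in atTop, (0 : ℝ) < Nat.primeCounting n := by
  filter_upwards [eventually_ge_atTop 2] with n hn
  have h := Nat.monotone_primeCounting hn
  have h2 : 0 < Nat.primeCounting 2 := by
    have : Nat.primeCounting 2 = 1 := by decide
    omega
  exact_mod_cast lt_of_lt_of_le h2 h

lemma wt_tendsto (G : SimpleGraph ℕ) (m : ℕ) :
    Tendsto (fun n : ℕ => (wt n m : ℝ) * Real.log (fG G m) / (Nat.primeCounting n : ℝ)) atTop (𝓝 (aG G m)) := by
  rcases Nat.eq_zero_or_pos m with rfl | hm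
  · simp [fG_zero, aG_zero]
  have h := ((pi_ratio m hm).sub (pi_ratio (m + 1) (by omega))).mul_const (Real.log (fG G m))
  have hm' : (0 : ℝ) < m := by exact_mod_cast hm
  have e : ((1 : ℝ) / m - 1 / ((m + 1 : ℕ) : ℝ)) * Real.log (fG G m) = aG G m := by
    unfold aG
    push_cast
    field_simp
    ring
  rw [e] at h
  refine h.congr fun n => ?_
  have h2 := wt_eq n m hm
  have h3 : (wt n m : ℝ) = Nat.primeCounting (n / m) - Nat.primeCounting (n / (m + 1)) := by
    rw [← h2]; push_cast; ring
  rw [h3]; ring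

lemma wt_sum_tendsto (G : SimpleGraph ℕ) (M : ℕ) :
    Tendsto (fun n : ℕ => (∑ m ∈ Finset.range M, (wt n m : ℝ) * Real.log (fG G m)) / (Nat.primeCounting n : ℝ)) atTop
      (𝓝 (∑ m ∈ Finset.range M, aG G m)) := by
  simp only [Finset.sum_div]
  exact tendsto_finsetSum _ fun m _ => wt_tendsto G m

lemma log_prod_wt (G : SimpleGraph ℕ) (M n : ℕ) :
    Real.log ((∏ m ∈ Finset.range M, fG G m ^ wt n m : ℕ) : ℝ) = ∑ m ∈ Finset.range M, (wt n m : ℝ) * Real.log (fG G m) := by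
  push_cast
  rw [Real.log_prod]
  · simp
  · intro m _
    have : 0 < fG G m := fG_pos G m
    positivity

lemma Sk_pos {k : ℕ} (hk : 1 ≤ k) (n : ℕ) : 1 ≤ Sk k n := by
  simpa [bigP] using sk_lower hk (kpf_bot k) (M := 0) (n := n) (by simp)

lemma lower_ev {k : ℕ} (hk : 1 ≤ k) {ε : ℝ} (hε : 0 < ε) :
    ∀ᶠ n : ℕ in atTop, Real.log (betaK k) - ε < Real.log (Sk k n) / (Nat.primeCounting n : ℝ) := by
  have h0 : betaK k * Real.exp (-ε) < betaK k := by
    have := betaK_pos k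
    have h2 : Real.exp (-ε) < 1 := by rw [Real.exp_lt_one_iff]; linarith
    nlinarith
  obtain ⟨x, ⟨G, hG, rfl⟩, hx⟩ := exists_lt_of_lt_csSup (s := {x : ℝ | ∃ G : SimpleGraph ℕ, KProductFree k G ∧ x = gProd G})
    ⟨_, ⊥, kpf_bot k, rfl⟩ h0
  rw [gProd_eq] at hx
  have h1 : Real.log (betaK k) - ε < ∑' m, aG G m := by
    have := Real.log_lt_log (by have := betaK_pos k; positivity) hx
    rw [Real.log_exp, Real.log_mul (betaK_pos k).ne' (Real.exp_pos _).ne', Real.log_exp] at this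
    linarith
  obtain ⟨M, hM⟩ := (((aG_summable G).hasSum.tendsto_sum_nat).eventually (lt_mem_nhds h1)).exists
  filter_upwards [(wt_sum_tendsto G M).eventually (lt_mem_nhds hM), eventually_ge_atTop (M ^ 2), pi_pos_ev] with n hn hnM hpi
  refine hn.trans_le ?_
  gcongr
  rw [← log_prod_wt]
  have h2 := sk_lower hk hG hnM
  rw [prod_bigP] at h2
  apply Real.log_le_log
  · have : 0 < ∏ m ∈ Finset.range M, fG G m ^ wt n m := Finset.prod_pos fun m _ => pow_pos (fG_pos G m) _
    exact_mod_cast this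
  · exact_mod_cast h2

/-- parameters -/
noncomputable def sN (n : ℕ) : ℕ := ⌊(Real.log n) ^ 4⌋₊ + 1
noncomputable def yN (k n : ℕ) : ℕ := sN n ^ (k + 2)

lemma sN_ge (n : ℕ) : (Real.log n) ^ 4 ≤ sN n := by
  unfold sN; push_cast; exact (Nat.lt_floor_add_one _).le

lemma tendsto_log_nat : Tendsto (fun n : ℕ => Real.log n) atTop atTop :=
  Real.tendsto_log_atTop.comp tendsto_natCast_atTop_atTop

lemma sN_le_ev : ∀ᶠ n : ℕ in atTop, (sN n : ℝ) ≤ (Real.log n) ^ 5 := by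
  filter_upwards [tendsto_log_nat.eventually_ge_atTop 2] with n hn
  unfold sN; push_cast
  have h1 := Nat.floor_le (show 0 ≤ (Real.log n) ^ 4 by positivity)
  have h2 : (1 : ℝ) ≤ (Real.log n) ^ 4 := one_le_pow₀ (by linarith)
  have h3 : (Real.log n) ^ 5 = (Real.log n) ^ 4 * Real.log n := by ring
  rw [h3]; nlinarith

lemma log_pow_div (r : ℕ) : Tendsto (fun n : ℕ => (Real.log n) ^ r / (n : ℝ)) atTop (𝓝 0) := by
  have h := (Real.isLittleO_pow_log_id_atTop (n := r)).tendsto_div_nhds_zero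
  exact h.comp tendsto_natCast_atTop_atTop

lemma sN_pow_div (r : ℕ) : ∀ᶠ n : ℕ in atTop, (sN n : ℝ) ^ r ≤ n := by
  filter_upwards [sN_le_ev, (log_pow_div (5 * r)).eventually (gt_mem_nhds one_pos), eventually_gt_atTop 0] with n h1 h2 h3
  have h3' : (0 : ℝ) < n := by exact_mod_cast h3
  rw [div_lt_one h3'] at h2
  calc (sN n : ℝ) ^ r ≤ ((Real.log n) ^ 5) ^ r := by gcongr
    _ = (Real.log n) ^ (5 * r) := by rw [← pow_mul]
    _ ≤ n := h2.le

lemma sN_pow_log_div (r : ℕ) : Tendsto (fun n : ℕ => (sN n : ℝ) ^ r * (Real.log n) ^ 2 / n) atTop (𝓝 0) := by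
  refine tendsto_of_tendsto_of_tendsto_of_le_of_le' tendsto_const_nhds (log_pow_div (5 * r + 2)) ?_ ?_
  · exact Eventually.of_forall fun n => by positivity
  · filter_upwards [sN_le_ev] with n h1
    rw [pow_add, pow_mul]
    gcongr

lemma sN_one (n : ℕ) : 1 ≤ sN n := by unfold sN; omega
lemma yN_one (k n : ℕ) : 1 ≤ yN k n := Nat.one_le_pow _ _ (sN_one n)

lemma sN_tendsto : Tendsto sN atTop atTop := by
  have h : Tendsto (fun n : ℕ => ⌊(Real.log n) ^ 4⌋₊) atTop atTop :=
    tendsto_nat_floor_atTop.comp ((tendsto_pow_atTop (by norm_num)).comp tendsto_log_nat)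
  exact tendsto_atTop_mono (fun n => Nat.le_succ _) h

lemma sN_le_yN (k n : ℕ) : sN n ≤ yN k n := Nat.le_self_pow (by omega) _

/-- prime number theorem bounds -/
lemma pi_ge_ev : ∀ᶠ n : ℕ in atTop, (n : ℝ) / (2 * Real.log n) ≤ Nat.primeCounting n := by
  have h := pnt.comp tendsto_natCast_atTop_atTop
  filter_upwards [h.eventually (lt_mem_nhds (show (1/2 : ℝ) < 1 by norm_num)), tendsto_log_nat.eventually_gt_atTop 0,
    eventually_gt_atTop 0] with n hn hl h0
  simp only [Function.comp, Nat.floor_natCast] at hn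
  have h0' : (0 : ℝ) < n := by exact_mod_cast h0
  rw [lt_div_iff₀ h0'] at hn
  rw [div_le_iff₀ (by positivity)]
  linarith

lemma pi_div_le_ev (k : ℕ) : ∀ᶠ n : ℕ in atTop, ∀ j : ℕ, 1 ≤ j → j ≤ yN k n →
    (Nat.primeCounting (n / j) : ℝ) ≤ 8 * Nat.primeCounting n / j := by
  obtain ⟨x0, hx0⟩ := eventually_atTop.1 (pnt.eventually (gt_mem_nhds (show (1 : ℝ) < 2 by norm_num)))
  filter_upwards [pi_ge_ev, sN_pow_div (2 * (k + 2)), tendsto_log_nat.eventually_gt_atTop 1,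
    (Real.tendsto_sqrt_atTop.comp tendsto_natCast_atTop_atTop).eventually_ge_atTop (max x0 1), eventually_gt_atTop 0] with n h1 h2 h3 h4 h0 j hj hjy
  have h0' : (0 : ℝ) < n := by exact_mod_cast h0
  have hj' : (1 : ℝ) ≤ j := by exact_mod_cast hj
  simp only [Function.comp] at h4
  have hy : (j : ℝ) ≤ √n := by
    apply Real.le_sqrt_of_sq_le
    calc (j : ℝ) ^ 2 ≤ (yN k n : ℝ) ^ 2 := by gcongr
      _ = (sN n : ℝ) ^ (2 * (k + 2)) := by unfold yN; push_cast; rw [← pow_mul]; ring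
      _ ≤ n := h2
  have hsq : √(n : ℝ) ≤ n / j := by
    rw [le_div_iff₀ (by linarith)]
    calc √(n : ℝ) * j ≤ √n * √n := by gcongr
      _ = n := Real.mul_self_sqrt h0'.le
  have h5 := hx0 ((n : ℝ) / j) (((le_max_left _ _).trans h4).trans hsq)
  rw [Nat.floor_div_natCast, Nat.floor_natCast] at h5
  have hlog : Real.log n / 2 ≤ Real.log (n / j) := by
    rw [← Real.log_sqrt h0'.le]
    exact Real.log_le_log (Real.sqrt_pos.2 h0') hsq
  have hpos : (0 : ℝ) < n / j := by positivity
  rw [div_lt_iff₀ hpos] at h5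
  have h6 : (Nat.primeCounting (n / j) : ℝ) * (Real.log n / 2) ≤ 2 * (n / j) :=
    le_trans (by gcongr) h5.le
  rw [div_le_iff₀ (by positivity)] at h1
  rw [le_div_iff₀ (by linarith)]
  have h7 : (Nat.primeCounting (n / j) : ℝ) * j * (Real.log n) ≤ 4 * n := by
    have : 2 * ((n : ℝ) / j) * j = 2 * n := by field_simp
    nlinarith
  have h8 : (Nat.primeCounting (n / j) : ℝ) * j * (Real.log n) ≤ 8 * Nat.primeCounting n * Real.log n := by linarith
  exact le_of_mul_le_mul_right h8 (by linarith)

noncomputable def EN (k M n : ℕ) : ℕ :=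
  n / yN k n + ∑ j ∈ Finset.Icc 1 (n / (sN n * yN k n)), ((k - 1) * (n / (j * sN n)) + (k - 1) * sN n ^ (k + 1))
      + (k * M ^ 2 + (k - 1) * yN k n ^ k) * yN k n

lemma EN_le {k M n : ℕ} (hk : 1 ≤ k) (hM : M ≤ yN k n) (hn : 1 ≤ n) :
    (EN k M n : ℝ) ≤ 2 * k * (n / sN n * (1 + Real.log n)) + 2 * k * (sN n : ℝ) ^ ((k + 2) * (k + 2)) := by
  set s := sN n with hs
  set y := yN k n with hy
  have hs1 : (1 : ℝ) ≤ s := by exact_mod_cast sN_one n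
  have hy1 : (1 : ℝ) ≤ y := by exact_mod_cast yN_one k n
  have hsy : (s : ℝ) ≤ y := by exact_mod_cast sN_le_yN k n
  have hn1 : (1 : ℝ) ≤ n := by exact_mod_cast hn
  have hk1 : (1 : ℝ) ≤ k := by exact_mod_cast hk
  have hys : (y : ℝ) = (s : ℝ) ^ (k + 2) := by rw [hy, yN]; push_cast; rfl
  have hlog : 0 ≤ Real.log n := Real.log_nonneg hn1
  have hMy : (M : ℝ) ≤ y := by exact_mod_cast hM
  set N := n / (s * y) with hN
  have hNn : (N : ℝ) ≤ n / (s * y) := by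
    have := @Nat.cast_div_le ℝ _ _ _ n (s * y)
    push_cast at this; exact this
  have h1 : ((n / y : ℕ) : ℝ) ≤ n / s := by
    refine Nat.cast_div_le.trans ?_
    gcongr
  have h2 : ∑ j ∈ Finset.Icc 1 N, (((n / (j * s) : ℕ)) : ℝ) ≤ n / s * (1 + Real.log n) := by
    have h3 : ∀ j ∈ Finset.Icc 1 N, (((n / (j * s) : ℕ)) : ℝ) ≤ n / s * ((j : ℝ)⁻¹) := by
      intro j hj
      refine Nat.cast_div_le.trans (le_of_eq ?_)
      push_cast
      rw [← div_eq_mul_inv, div_div, mul_comm]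
    refine (Finset.sum_le_sum h3).trans ?_
    rw [← Finset.mul_sum]
    gcongr
    have h4 := harmonic_le_one_add_log N
    rw [harmonic_eq_sum_Icc] at h4
    push_cast at h4
    refine h4.trans ?_
    refine add_le_add le_rfl ?_
    rcases Nat.eq_zero_or_pos N with h | h
    · rw [h]; simpa using hlog
    · apply Real.log_le_log (by exact_mod_cast h)
      exact_mod_cast Nat.div_le_self _ _
  have h3 : (N : ℝ) * s ^ (k + 1) ≤ n / s := by
    calc (N : ℝ) * s ^ (k + 1) ≤ n / (s * y) * s ^ (k + 1) := by gcongr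
      _ = n / s / s := by rw [hys]; field_simp; ring
      _ ≤ n / s := div_le_self (by positivity) hs1
  have hk' : ((k - 1 : ℕ) : ℝ) = k - 1 := by push_cast [Nat.cast_sub hk]; ring
  have h5 : ((k : ℝ) * M ^ 2 + (k - 1) * y ^ k) * y ≤ 2 * k * (s : ℝ) ^ ((k + 2) * (k + 2)) := by
    rw [pow_mul, ← hys]
    have e1 : (M : ℝ) ^ 2 * y ≤ y ^ (k + 2) := by
      calc (M : ℝ) ^ 2 * y ≤ (y : ℝ) ^ 2 * y := by gcongr
        _ = (y : ℝ) ^ 3 := by ring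
        _ ≤ (y : ℝ) ^ (k + 2) := pow_le_pow_right₀ hy1 (by omega)
    have e2 : (y : ℝ) ^ k * y ≤ y ^ (k + 2) := by
      rw [← pow_succ]; exact pow_le_pow_right₀ hy1 (by omega)
    have e3 : (0 : ℝ) ≤ y ^ k * y := by positivity
    nlinarith
  have h6 : (EN k M n : ℝ) = ((n / y : ℕ) : ℝ) + ((k - 1) * ∑ j ∈ Finset.Icc 1 N, (((n / (j * s) : ℕ)) : ℝ) + (k - 1) * (N * s ^ (k + 1)))
      + (k * M ^ 2 + (k - 1) * y ^ k) * y := by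
    unfold EN
    rw [← hs, ← hy, ← hN]
    rw [Finset.sum_add_distrib, ← Finset.mul_sum]
    push_cast [hk']
    simp
    ring
  rw [h6]
  have h7 : (0 : ℝ) ≤ n / s := by positivity
  set Q := (n : ℝ) / s
  have e1 := mul_le_mul_of_nonneg_left h2 (sub_nonneg.2 hk1)
  have e2 := mul_le_mul_of_nonneg_left h3 (sub_nonneg.2 hk1)
  have e3 : 0 ≤ Q * Real.log n := by positivity
  nlinarith [mul_nonneg (sub_nonneg.2 hk1) e3]

lemma EN_tendsto {k : ℕ} (hk : 1 ≤ k) (M : ℕ) :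
    Tendsto (fun n : ℕ => (EN k M n : ℝ) * Real.log (n + 1) / Nat.primeCounting n) atTop (𝓝 0) := by
  have hlim : Tendsto (fun n : ℕ => 16 * k * (Real.log n)⁻¹ + 8 * k * ((sN n : ℝ) ^ ((k + 2) * (k + 2)) * (Real.log n) ^ 2 / n)) atTop (𝓝 0) := by
    have := ((tendsto_inv_atTop_zero.comp tendsto_log_nat).const_mul (16 * (k : ℝ))).add
      ((sN_pow_log_div ((k + 2) * (k + 2))).const_mul (8 * (k : ℝ)))
    simpa using this
  refine tendsto_of_tendsto_of_tendsto_of_le_of_le' tendsto_const_nhds hlim ?_ ?_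
  · refine Eventually.of_forall fun n => ?_
    have : 0 ≤ Real.log (n + 1) := Real.log_nonneg (by linarith [n.cast_nonneg (α := ℝ)])
    positivity
  · filter_upwards [pi_ge_ev, tendsto_log_nat.eventually_ge_atTop 1, sN_tendsto.eventually_ge_atTop M, eventually_ge_atTop 2] with n h1 h2 h3 h4
    have hE := EN_le hk (h3.trans (sN_le_yN k n)) (show 1 ≤ n by omega)
    have hn : (2 : ℝ) ≤ n := by exact_mod_cast h4
    set l := Real.log n with hl
    set s := (sN n : ℝ)
    have hs : l ^ 4 ≤ s := sN_ge n
    have hl2 : Real.log (n + 1) ≤ 2 * l := by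
      rw [hl, ← Real.log_rpow (by linarith)]
      apply Real.log_le_log (by linarith)
      norm_cast
      nlinarith
    have hl3 : 0 ≤ Real.log ((n : ℝ) + 1) := Real.log_nonneg (by linarith)
    have hs1 : (1 : ℝ) ≤ s := by show (1 : ℝ) ≤ (sN n : ℝ); exact_mod_cast sN_one n
    set Y := s ^ ((k + 2) * (k + 2))
    have hY : 0 ≤ Y := by positivity
    have hpi : 0 < (n : ℝ) / (2 * l) := by positivity
    have hk1 : (1 : ℝ) ≤ k := by exact_mod_cast hk
    calc (EN k M n : ℝ) * Real.log (n + 1) / Nat.primeCounting n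
        ≤ (2 * k * (n / s * (1 + l)) + 2 * k * Y) * (2 * l) / (n / (2 * l)) := by gcongr
      _ ≤ (2 * k * (n / l ^ 4 * (l + l)) + 2 * k * Y) * (2 * l) / (n / (2 * l)) := by gcongr
      _ = _ := by field_simp; ring

noncomputable def ZZ : ℝ := ∑' i : ℕ, 1 / (i : ℝ) ^ (3 / 2 : ℝ)

lemma ZZ_nonneg : 0 ≤ ZZ := tsum_nonneg fun i => by positivity

lemma tail_ev (k M : ℕ) (hM : 1 ≤ M) : ∀ᶠ n : ℕ in atTop,
    ∑ p ∈ (bigP n (yN k n)).filter (fun p => ¬ n / p < M), Real.log ((n / p : ℕ) + 1) ≤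
      8 * ZZ / √M * Nat.primeCounting n := by
  filter_upwards [pi_div_le_ev k, sN_tendsto.eventually_ge_atTop M] with n h1 h2
  set y := yN k n
  have hMy : M ≤ y := h2.trans (sN_le_yN k n)
  set S := (bigP n y).filter (fun p => ¬ n / p < M) with hS
  have hlog : ∀ p ∈ S, Real.log ((n / p : ℕ) + 1) ≤ ∑ i ∈ Finset.Icc 1 y, if i ≤ n / p then (i : ℝ)⁻¹ else 0 := by
    intro p hp
    have h3 := log_add_one_le_harmonic (n / p)
    rw [harmonic_eq_sum_Icc] at h3
    push_cast at h3
    refine h3.trans ?_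
    rw [← Finset.sum_filter]
    refine Finset.sum_le_sum_of_subset_of_nonneg ?_ fun i _ _ => by positivity
    intro i hi
    have h4 := bigP_div (Finset.mem_filter.1 hp).1
    rw [Finset.mem_Icc] at hi
    rw [Finset.mem_filter, Finset.mem_Icc]
    omega
  refine (Finset.sum_le_sum hlog).trans ?_
  rw [Finset.sum_comm]
  have h5 : ∀ i ∈ Finset.Icc 1 y, (∑ p ∈ S, if i ≤ n / p then (i : ℝ)⁻¹ else 0) ≤
      8 * Nat.primeCounting n / √M * (1 / (i : ℝ) ^ (3 / 2 : ℝ)) := by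
    intro i hi
    rw [Finset.mem_Icc] at hi
    rw [← Finset.sum_filter, Finset.sum_const, nsmul_eq_mul]
    have hc : ((S.filter (fun p => i ≤ n / p)).card : ℝ) ≤ Nat.primeCounting (n / max i M) := by
      rw [primeCounting_eq_card]
      norm_cast
      apply Finset.card_le_card
      intro p hp
      rw [Finset.mem_filter, hS, Finset.mem_filter] at hp
      have hpp := bigP_prime hp.1.1
      rw [Finset.mem_filter, Finset.mem_Icc]
      refine ⟨⟨hpp.pos, ?_⟩, hpp⟩
      rw [Nat.le_div_iff_mul_le (by omega), mul_comm, ← Nat.le_div_iff_mul_le hpp.pos]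
      omega
    have h6 := h1 (max i M) (by omega) (by omega)
    have hi1 : (1 : ℝ) ≤ i := by exact_mod_cast hi.1
    have hM1 : (1 : ℝ) ≤ M := by exact_mod_cast hM
    have hmax : √i * √M ≤ ((max i M : ℕ) : ℝ) := by
      push_cast
      calc √(i : ℝ) * √M ≤ √(max (i : ℝ) M) * √(max (i : ℝ) M) := by
            gcongr
            · exact le_max_left _ _
            · exact le_max_right _ _
        _ = _ := Real.mul_self_sqrt (by positivity)
    have hi0 : 0 < √(i : ℝ) := Real.sqrt_pos.2 (by linarith)
    have hM0 : 0 < √(M : ℝ) := Real.sqrt_pos.2 (by linarith)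
    have e : (i : ℝ) ^ (3 / 2 : ℝ) = i * √i := by
      rw [show (3 / 2 : ℝ) = 1 + 1 / 2 by norm_num, Real.rpow_add (by linarith), Real.rpow_one, Real.sqrt_eq_rpow]
    rw [e]
    calc ((S.filter (fun p => i ≤ n / p)).card : ℝ) * (i : ℝ)⁻¹
        ≤ (8 * Nat.primeCounting n / ((max i M : ℕ) : ℝ)) * (i : ℝ)⁻¹ := by gcongr; exact hc.trans h6
      _ ≤ (8 * Nat.primeCounting n / (√i * √M)) * (i : ℝ)⁻¹ := by gcongr
      _ = _ := by field_simp
  refine (Finset.sum_le_sum h5).trans ?_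
  rw [← Finset.mul_sum]
  have h7 : ∑ i ∈ Finset.Icc 1 y, 1 / (i : ℝ) ^ (3 / 2 : ℝ) ≤ ZZ :=
    (Real.summable_one_div_nat_rpow.2 (by norm_num)).sum_le_tsum _ fun i _ => by positivity
  calc 8 * (Nat.primeCounting n : ℝ) / √M * ∑ i ∈ Finset.Icc 1 y, 1 / (i : ℝ) ^ (3 / 2 : ℝ)
      ≤ 8 * (Nat.primeCounting n : ℝ) / √M * ZZ := by gcongr
    _ = _ := by ring

lemma upper_ev {k : ℕ} (hk : Odd k) (hk3 : 3 ≤ k) {ε : ℝ} (hε : 0 < ε) :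
    ∀ᶠ n : ℕ in atTop, Real.log (Sk k n) / (Nat.primeCounting n : ℝ) < Real.log (betaK k) + 5 * ε := by
  -- choose M
  have hlimM : Tendsto (fun M : ℕ => (k - 1 : ℕ) * (8 * ZZ / √M)) atTop (𝓝 0) := by
    have h : Tendsto (fun M : ℕ => √(M : ℝ)) atTop atTop := Real.tendsto_sqrt_atTop.comp tendsto_natCast_atTop_atTop
    simpa using (h.const_div_atTop (8 * ZZ)).const_mul ((k - 1 : ℕ) : ℝ)
  obtain ⟨M, hMε, hM1⟩ := ((hlimM.eventually (gt_mem_nhds hε)).and (eventually_ge_atTop 1)).exists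
  have hD : ∀ᶠ n : ℕ in atTop, ∀ D ∈ DD k M,
      (∑ m ∈ Finset.range M, (wt n m : ℝ) * Real.log (fG (gr D) m)) / (Nat.primeCounting n : ℝ) < Real.log (betaK k) + ε := by
    rw [Filter.eventually_all_finset]
    intro D hD
    refine (wt_sum_tendsto (gr D) M).eventually (gt_mem_nhds ?_)
    have h1 : ∑ m ∈ Finset.range M, aG (gr D) m ≤ ∑' m, aG (gr D) m :=
      (aG_summable _).sum_le_tsum _ fun m _ => aG_nonneg _ m
    have h2 : ∑' m, aG (gr D) m ≤ Real.log (betaK k) := by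
      rw [Real.le_log_iff_exp_le (betaK_pos k), ← gProd_eq]
      exact gProd_le_betaK (Finset.mem_filter.1 hD).2
    linarith
  have hcardlim : Tendsto (fun n : ℕ => Real.log ((DD k M).card) / (Nat.primeCounting n : ℝ)) atTop (𝓝 0) :=
    (tendsto_natCast_atTop_atTop.comp Nat.tendsto_primeCounting).const_div_atTop _
  filter_upwards [hD, hcardlim.eventually (gt_mem_nhds hε), (EN_tendsto (show 1 ≤ k by omega) M).eventually (gt_mem_nhds hε),
    tail_ev k M hM1, pi_pos_ev, sN_tendsto.eventually_ge_atTop M, sN_pow_div (2 * (k + 2)), sN_pow_div (2 + (k + 2))]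
    with n hn1 hn2 hn3 hn4 hpi hn5 hn6 hn7
  set π : ℝ := (Nat.primeCounting n : ℝ) with hπ
  have hup := sk_upper hk hk3 (n := n) (M := M) (s := sN n) (y := yN k n) (E := EN k M n) (sN_one n) (yN_one k n)
    (hn5.trans (sN_le_yN k n))
    (by unfold yN; rw [← pow_add]; exact_mod_cast hn7)
    (by unfold yN; rw [← pow_mul, mul_comm]; exact_mod_cast hn6) le_rfl
  set b : ℝ := Real.log (betaK k) with hb
  have hterm : ∀ D ∈ DD k M, (((n + 1) ^ EN k M n * ((∏ m ∈ Finset.range M, fG (gr D) m ^ wt n m) *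
      ∏ p ∈ (bigP n (yN k n)).filter (fun p => ¬ n / p < M), (n / p + 1) ^ (k - 1)) : ℕ) : ℝ) ≤ Real.exp (π * (b + 3 * ε)) := by
    intro D hD
    have hp1 : 0 < (∏ m ∈ Finset.range M, fG (gr D) m ^ wt n m) := Finset.prod_pos fun m _ => pow_pos (fG_pos _ m) _
    have hp2 : 0 < ∏ p ∈ (bigP n (yN k n)).filter (fun p => ¬ n / p < M), (n / p + 1) ^ (k - 1) :=
      Finset.prod_pos fun p _ => by positivity
    have hp3 : 0 < (n + 1) ^ EN k M n := by positivity
    rw [← Real.log_le_iff_le_exp (by exact_mod_cast Nat.mul_pos hp3 (Nat.mul_pos hp1 hp2))]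
    rw [Nat.cast_mul, Nat.cast_mul, Real.log_mul (by exact_mod_cast hp3.ne') (by exact_mod_cast (Nat.mul_pos hp1 hp2).ne'),
      Real.log_mul (by exact_mod_cast hp1.ne') (by exact_mod_cast hp2.ne'), log_prod_wt]
    have t1 : Real.log (((n + 1) ^ EN k M n : ℕ) : ℝ) ≤ ε * π := by
      rw [div_lt_iff₀ hpi] at hn3
      push_cast
      rw [Real.log_pow]
      exact hn3.le
    have t2 := hn1 D hD
    rw [div_lt_iff₀ hpi] at t2
    have t3 : Real.log ((∏ p ∈ (bigP n (yN k n)).filter (fun p => ¬ n / p < M), (n / p + 1) ^ (k - 1) : ℕ) : ℝ) ≤ ε * π := by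
      rw [Nat.cast_prod, Real.log_prod fun p _ => by positivity]
      have : ∀ p ∈ (bigP n (yN k n)).filter (fun p => ¬ n / p < M), Real.log (((n / p + 1) ^ (k - 1) : ℕ) : ℝ) =
          (k - 1 : ℕ) * Real.log ((n / p : ℕ) + 1) := fun p _ => by
        rw [Nat.cast_pow, Real.log_pow, Nat.cast_add_one]
      rw [Finset.sum_congr rfl this, ← Finset.mul_sum]
      calc ((k - 1 : ℕ) : ℝ) * _ ≤ ((k - 1 : ℕ) : ℝ) * (8 * ZZ / √M * π) := mul_le_mul_of_nonneg_left hn4 (by positivity)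
        _ = ((k - 1 : ℕ) : ℝ) * (8 * ZZ / √M) * π := by ring
        _ ≤ ε * π := by gcongr
    nlinarith
  have hS : (Sk k n : ℝ) ≤ (DD k M).card * Real.exp (π * (b + 3 * ε)) := by
    have h : (Sk k n : ℝ) ≤ _ := Nat.cast_le.2 hup
    rw [Nat.cast_sum] at h
    refine h.trans ((Finset.sum_le_sum hterm).trans ?_)
    rw [Finset.sum_const, nsmul_eq_mul]
  have hS1 : (1 : ℝ) ≤ Sk k n := by exact_mod_cast Sk_pos (by omega) n
  have hcard : ((DD k M).card : ℝ) ≠ 0 := by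
    intro h
    rw [h] at hS; linarith
  have hlog := Real.log_le_log (by linarith) hS
  rw [Real.log_mul hcard (Real.exp_pos _).ne', Real.log_exp] at hlog
  rw [div_lt_iff₀ hpi] at hn2 ⊢
  nlinarith

theorem part1 (k : ℕ) (hk : Odd k) (hk3 : 3 ≤ k) :
    Tendsto (fun n : ℕ => (Sk k n : ℝ) ^ ((1 : ℝ) / (Nat.primeCounting n : ℝ))) atTop (𝓝 (betaK k)) := by
  have h : Tendsto (fun n : ℕ => Real.log (Sk k n) / (Nat.primeCounting n : ℝ)) atTop (𝓝 (Real.log (betaK k))) := by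
    rw [tendsto_order]
    constructor
    · intro a ha
      filter_upwards [lower_ev (show 1 ≤ k by omega) (sub_pos.2 ha)] with n hn
      linarith
    · intro a ha
      filter_upwards [upper_ev hk hk3 (ε := (a - Real.log (betaK k)) / 5) (by linarith)] with n hn
      linarith
  have h2 := (Real.continuous_exp.tendsto _).comp h
  rw [Real.exp_log (betaK_pos k)] at h2
  refine h2.congr fun n => ?_
  have hS1 : (1 : ℝ) ≤ Sk k n := by exact_mod_cast Sk_pos (show 1 ≤ k by omega) n
  rw [Real.rpow_def_of_pos (by linarith), mul_one_div]
  rfl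

end Main

theorem count_mulKSidon_odd :
    (∀ k : ℕ, Odd k → 5 ≤ k →
      Filter.Tendsto
        (fun n : ℕ => (Sk k n : ℝ) ^ ((1 : ℝ) / (Nat.primeCounting n : ℝ)))
        Filter.atTop (nhds (betaK k))) ∧
    (∀ k k' : ℕ, Odd k → Odd k' → 3 ≤ k → k ≤ k' → betaK k' ≤ betaK k) ∧
    (∀ k : ℕ, Odd k → 5 ≤ k → betaMinus ≤ betaK k) := by
  exact ⟨fun k hk h5 => part1 k hk (by omega), fun k k' hk hk' _ h => part2 k k' hk hk' h,
    fun k hk _ => part3 k hk⟩
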